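/- arXiv:1807.06219 — 8 statements merged into one kernel-verified Lean document; each statement's English description precedes it below -/
import Mathlib

section
/- Let X be a compact Hausdorff space for which there exists a continuous surjection f : X → Y onto a metrizable compact space Y such that f is fully closed and every fiber f⁻¹(y) is metrizable (i.e., X is a Fedorchuk compact of spectral height at most 3). Then the Banach space C(X) of continuous real-valued functions on X with the supremum norm ‖·‖∞ admits an equivalent locally uniformly rotund norm that is lower semicontinuous with respect to the topology of pointwise convergence. Precisely, there exists a function N : C(X) → ℝ such that: (i) N is a norm: N(g) = 0 iff g = 0, N(a·g) = |a|·N(g) for all a ∈ ℝ, and N(g + h) ≤ N(g) + N(h); (ii) N is equivalent to the supremum norm: there exist constants c, C > 0 with c·‖g‖∞ ≤ N(g) ≤ C·‖g‖∞ for all g; (iii) N is locally uniformly rotund: for every g ∈ C(X) and every sequence (gₙ) in C(X) with N(gₙ) = N(g) = 1 for all n and N(gₙ + g) → 2, one has N(gₙ − g) → 0; (iv) N is lower semicontinuous for the pointwise topology: for every g ∈ C(X) and every real c < N(g) there exist a finite set F ⊆ X and ε > 0 such that every h ∈ C(X) satisfying |h(x) − g(x)| < ε for all x ∈ F has N(h)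 > c. -/
/-!
The norm is built by the decomposition method of Deville, from seminorms only, so that homogeneity
and the triangle inequality come for free.

For `g ∈ C(X)` and `y ∈ Y` let `osc y g` be the oscillation of `g` on the fiber over `y`. Since `f`
is fully closed, only finitely many fibers carry an oscillation `≥ ε` (`finite_osc_ge`). Hence
the set `A₀ = {y | ε ≤ osc y g}` is finite, and it is the unique maximizer, with a positive gap, of
`A ↦ ∑ y ∈ A, osc y g` among the finite sets with at most `card A₀` elements (`exists_gap`).

For a fixed finite `A ⊆ Y`, there is a countable set `H_A ⊆ C(X)` such that every `g` whose
oscillation is `< ε` off `A` lies within `2 ε` of `H_A` (`exists_seq_approx`): on the fibers over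
`A`, which are metrizable, `g` is close to a member of a countable set, on the other fibers it is
close to a rational constant, and these local approximations are glued by a partition of unity on
`Y`; the functions so obtained lie in the span of a separable set because `C(Y)` is separable.
Given `h ∈ H_A`, pick `x` with `|h x| = ‖h‖`. The seminorms `g ↦ ‖g - (g x / h x) • h‖` and
`g ↦ |g x|` together control the distance to `h`; their weighted `ℓ²`-sum over `h ∈ H_A` is a
seminorm `ψ_A` (`exists_psi`).

For each `n` and `m`, let `q_{n,m}² = sup {(φ_A² + ψ_A² / (m + 1)) / 2 | card A ≤ n}` with `φ_A`
proportional to `∑ y ∈ A, osc y` (`exists_layer`), and let `N²` be a weighted sum of `‖·‖²` and all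
`q_{n,m}²`. If `N (gₖ) = N g = 1` and `N (gₖ + g) → 2`, then the parallelogram defect
`2 q(gₖ)² + 2 q(g)² - q(gₖ + g)²` tends to `0` for every constituent `q`. For `q_{n,m}` with
`n = card A₀` and `m` large, the gap forces the supremum at `gₖ + g` to be almost attained at `A₀`
only, so the defect of `ψ_{A₀}` tends to `0` (`tendsto_defect_of_sup`), and `‖gₖ - g‖` is eventually
at most `10 ε`. Suprema and weighted `ℓ²`-sums preserve pointwise lower semicontinuity.
-/
open Filter Topology Set

set_option linter.unusedSectionVars false

namespace Fedorchuk

/-! ### Seminorms, their parallelogram defect, weighted sums and suprema -/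

section Abstract

variable {V : Type*} [AddCommGroup V] [Module ℝ V]

/-- The parallelogram defect of a seminorm `p` at the pair `(u, v)`. It is nonnegative, and it is
additive in `p ^ 2`. -/
def defect (p : Seminorm ℝ V) (u v : V) : ℝ :=
  2 * p u ^ 2 + 2 * p v ^ 2 - p (u + v) ^ 2

lemma sq_sub_le_defect (p : Seminorm ℝ V) (u v : V) : (p u - p v) ^ 2 ≤ defect p u v := by
  have h1 := map_add_le_add p u v
  have h2 := apply_nonneg p (u + v)
  unfold defect
  nlinarith

lemma defect_nonneg (p : Seminorm ℝ V) (u v : V) : 0 ≤ defect p u v :=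
  (sq_nonneg _).trans (sq_sub_le_defect p u v)

/-- Weighted `ℓ²`-sums of pointwise bounded families of seminorms are seminorms (Minkowski). -/
lemma exists_l2_sum {ι : Type*} (w : ι → ℝ) (hw0 : ∀ i, 0 ≤ w i) {S : ℝ} (hw : HasSum w S)
    (hS : S ≤ 1) (p : ι → Seminorm ℝ V) (B : V → ℝ) (hB : ∀ v, 0 ≤ B v)
    (hpB : ∀ i v, p i v ≤ B v) :
    ∃ q : Seminorm ℝ V, (∀ v, q v ≤ B v) ∧
      ∀ v, HasSum (fun i => w i * p i v ^ 2) (q v ^ 2) := by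
  have hsum : ∀ v, Summable fun i => w i * p i v ^ 2 := fun v =>
    Summable.of_nonneg_of_le (fun i => mul_nonneg (hw0 i) (sq_nonneg _))
      (fun i => mul_le_mul_of_nonneg_left
        (pow_le_pow_left₀ (apply_nonneg _ _) (hpB i v) 2) (hw0 i))
      (hw.summable.mul_right (B v ^ 2))
  have hnn : ∀ v, 0 ≤ ∑' i, w i * p i v ^ 2 := fun v =>
    tsum_nonneg fun i => mul_nonneg (hw0 i) (sq_nonneg _)
  have hform : ∀ v, (fun i => w i * p i v ^ 2) = fun i => (√(w i) * p i v) ^ (2 : ℝ) := by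
    intro v; ext i
    rw [Real.rpow_two, mul_pow, Real.sq_sqrt (hw0 i)]
  have hf0 : ∀ v i, 0 ≤ √(w i) * p i v := fun v i =>
    mul_nonneg (Real.sqrt_nonneg _) (apply_nonneg _ _)
  refine ⟨Seminorm.of (fun v => √(∑' i, w i * p i v ^ 2)) ?_ ?_, ?_, ?_⟩
  · intro u v
    have hu := hsum u
    have hv := hsum v
    rw [hform] at hu hv
    have key := Real.Lp_add_le_tsum_of_nonneg (p := 2) (by norm_num) (hf0 u) (hf0 v) hu hv
    rw [← hform, ← hform] at key
    simp only [← Real.sqrt_eq_rpow] at key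
    refine le_trans (Real.sqrt_le_sqrt ?_) key.2
    refine Summable.tsum_le_tsum (fun i => ?_) (hsum _) key.1
    rw [Real.rpow_two, ← mul_add, mul_pow, Real.sq_sqrt (hw0 i)]
    exact mul_le_mul_of_nonneg_left
      (pow_le_pow_left₀ (apply_nonneg _ _) (map_add_le_add _ _ _) 2) (hw0 i)
  · intro a v
    have : (fun i => w i * p i (a • v) ^ 2) = fun i => a ^ 2 * (w i * p i v ^ 2) := by
      ext i
      rw [map_smul_eq_mul, mul_pow, Real.norm_eq_abs, sq_abs]; ring
    simp only [this, tsum_mul_left]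
    rw [Real.sqrt_mul (sq_nonneg a), Real.sqrt_sq_eq_abs, Real.norm_eq_abs]
  · intro v
    change √(∑' i, w i * p i v ^ 2) ≤ B v
    refine Real.sqrt_le_iff.2 ⟨hB v, ?_⟩
    calc ∑' i, w i * p i v ^ 2 ≤ ∑' i, w i * B v ^ 2 :=
          Summable.tsum_le_tsum (fun i => mul_le_mul_of_nonneg_left
            (pow_le_pow_left₀ (apply_nonneg _ _) (hpB i v) 2) (hw0 i)) (hsum v)
            (hw.summable.mul_right _)
      _ = S * B v ^ 2 := by rw [tsum_mul_right, hw.tsum_eq]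
      _ ≤ B v ^ 2 := mul_le_of_le_one_left (sq_nonneg _) hS
  · intro v
    change HasSum _ (√(∑' i, w i * p i v ^ 2) ^ 2)
    rw [Real.sq_sqrt (hnn v)]
    exact (hsum v).hasSum

lemma defect_hasSum {ι : Type*} {w : ι → ℝ} {p : ι → Seminorm ℝ V} {q : Seminorm ℝ V}
    (h : ∀ v, HasSum (fun i => w i * p i v ^ 2) (q v ^ 2)) (u v : V) :
    HasSum (fun i => w i * defect (p i) u v) (defect q u v) := by
  have := (((h u).mul_left 2).add ((h v).mul_left 2)).sub (h (u + v))
  have e : (fun i => w i * defect (p i) u v) = fun i =>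
      2 * (w i * p i u ^ 2) + 2 * (w i * p i v ^ 2) - w i * p i (u + v) ^ 2 := by
    ext i
    unfold defect
    ring
  rw [e]
  exact this

lemma mul_defect_le {ι : Type*} {w : ι → ℝ} (hw0 : ∀ i, 0 ≤ w i) {p : ι → Seminorm ℝ V}
    {q : Seminorm ℝ V} (h : ∀ v, HasSum (fun i => w i * p i v ^ 2) (q v ^ 2)) (i : ι) (u v : V) :
    w i * defect (p i) u v ≤ defect q u v :=
  le_hasSum (defect_hasSum h u v) i fun j _ => mul_nonneg (hw0 j) (defect_nonneg _ _ _)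

lemma tendsto_defect_of_l2 {ι : Type*} {w : ι → ℝ} (hw0 : ∀ i, 0 < w i) {p : ι → Seminorm ℝ V}
    {q : Seminorm ℝ V} (h : ∀ v, HasSum (fun i => w i * p i v ^ 2) (q v ^ 2))
    {u : ℕ → V} {v : V} (hq : Tendsto (fun k => defect q (u k) v) atTop (𝓝 0)) (i : ι) :
    Tendsto (fun k => defect (p i) (u k) v) atTop (𝓝 0) := by
  refine squeeze_zero (fun k => defect_nonneg _ _ _) (fun k => ?_)
    (by simpa using hq.const_mul (w i)⁻¹)
  rw [inv_mul_eq_div, le_div_iff₀' (hw0 i)]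
  exact mul_defect_le (fun i => (hw0 i).le) h i _ _

/-- The square of a weighted `ℓ²`-sum is the supremum of its finite partial sums, so lower
semicontinuity passes from the summands to the sum. -/
lemma lsc_of_hasSum [TopologicalSpace V] {ι : Type*} {w : ι → ℝ} (hw0 : ∀ i, 0 ≤ w i)
    {p : ι → Seminorm ℝ V} {q : Seminorm ℝ V}
    (h : ∀ v, HasSum (fun i => w i * p i v ^ 2) (q v ^ 2))
    (hp : ∀ i, LowerSemicontinuous (p i)) : LowerSemicontinuous q := by
  have hnn : ∀ v i, 0 ≤ w i * p i v ^ 2 := fun v i => mul_nonneg (hw0 i) (sq_nonneg _)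
  have hq : ⇑q = Real.sqrt ∘ fun v => ⨆ s : Finset ι, ∑ i ∈ s, w i * p i v ^ 2 := by
    ext v
    have : IsLUB (range fun s : Finset ι => ∑ i ∈ s, w i * p i v ^ 2) (q v ^ 2) :=
      isLUB_hasSum (hnn v) (h v)
    rw [Function.comp, this.ciSup_eq, Real.sqrt_sq (apply_nonneg _ _)]
  rw [hq]
  refine Real.continuous_sqrt.comp_lowerSemicontinuous ?_ Real.sqrt_monotone
  refine lowerSemicontinuous_ciSup (fun v => ?_) fun s => lowerSemicontinuous_sum fun i _ => ?_
  · exact ⟨_, (isLUB_hasSum (hnn v) (h v)).1⟩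
  · have e : (fun v => w i * p i v ^ 2) = (fun t : ℝ => w i * (max t 0) ^ 2) ∘ p i := by
      ext v
      simp
    rw [e]
    refine Continuous.comp_lowerSemicontinuous (by fun_prop) (hp i) fun a b hab => ?_
    have : max a 0 ≤ max b 0 := max_le_max_right 0 hab
    exact mul_le_mul_of_nonneg_left (pow_le_pow_left₀ (le_max_right _ _) this 2) (hw0 i)

/-- The `ℓ²`-combination of two seminorms with weights `1 / 2` and `c / 2`. Lower semicontinuity is
asserted for an arbitrary topology on `V`, unrelated to the bounds. -/
lemma exists_pair (c : ℝ) (hc0 : 0 < c) (hc1 : c ≤ 1) (p₁ p₂ : Seminorm ℝ V) (B : V → ℝ)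
    (hB : ∀ v, 0 ≤ B v) (h₁ : ∀ v, p₁ v ≤ B v) (h₂ : ∀ v, p₂ v ≤ B v) :
    ∃ r : Seminorm ℝ V, (∀ v, r v ≤ B v) ∧ (∀ v, r v ^ 2 = (p₁ v ^ 2 + c * p₂ v ^ 2) / 2) ∧
      ∀ [TopologicalSpace V], LowerSemicontinuous p₁ → LowerSemicontinuous p₂ →
        LowerSemicontinuous r := by
  obtain ⟨r, hr, hr2⟩ := exists_l2_sum (fun b : Bool => if b then 1 / 2 else c / 2)
    (by intro b; cases b <;> (simp; try positivity)) (hasSum_fintype _) (by simp; linarith)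
    (fun b => if b then p₁ else p₂) B hB (by intro b; cases b <;> simp [h₁, h₂])
  refine ⟨r, hr, fun v => ?_, fun l₁ l₂ => lsc_of_hasSum ?_ hr2 ?_⟩
  · have := (hr2 v).unique (hasSum_fintype _)
    simp at this
    rw [this]; ring
  · intro b; cases b <;> (simp; try positivity)
  · intro b; cases b <;> simpa

/-- Localization of a supremum. Let `q` be the supremum of the `r a`, where
`r a ^ 2 = (φ a ^ 2 + c * ψ a ^ 2) / 2`. If `φ a₀ v` exceeds the other `φ a v` by a gap that the terms
`c * ψ a v ^ 2` cannot compensate, then an index almost attaining `q (u k + v)` must be `a₀` as soon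
as the defect of `q` at `(u k, v)` is small; the defect of `q` then bounds that of `ψ a₀`. -/
lemma tendsto_defect_of_sup {α : Type*} [Nonempty α] (φ ψ r : α → Seminorm ℝ V)
    (q : Seminorm ℝ V) (B : V → ℝ) (hrB : ∀ a v, r a v ≤ B v) (hq : ∀ v, q v = ⨆ a, r a v)
    {c : ℝ} (hc : 0 < c) (hr : ∀ a v, r a v ^ 2 = (φ a v ^ 2 + c * ψ a v ^ 2) / 2)
    {v : V} {δ : ℝ} (hδ : 0 < δ) (hψ : ∀ a, c * ψ a v ^ 2 ≤ δ) (a₀ : α)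
    (hφ : ∀ a, a ≠ a₀ → φ a v ^ 2 + 2 * δ ≤ φ a₀ v ^ 2)
    {u : ℕ → V} (hu : Tendsto (fun k => defect q (u k) v) atTop (𝓝 0)) :
    Tendsto (fun k => defect (ψ a₀) (u k) v) atTop (𝓝 0) := by
  have hle : ∀ a v, r a v ≤ q v := fun a v => by
    rw [hq]; exact le_ciSup ⟨B v, by rintro _ ⟨a, rfl⟩; exact hrB a v⟩ a
  have hle2 : ∀ a v, r a v ^ 2 ≤ q v ^ 2 := fun a v =>
    pow_le_pow_left₀ (apply_nonneg _ _) (hle a v) 2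
  have happrox : ∀ (z : V) (η : ℝ), 0 < η → ∃ a, q z ^ 2 - η < r a z ^ 2 := by
    intro z η hη
    by_contra! hcon
    have h1 : q z ≤ √(q z ^ 2 - η) :=
      (hq z).trans_le (ciSup_le fun a => Real.le_sqrt_of_sq_le (hcon a))
    have h0 : 0 ≤ q z ^ 2 - η := (sq_nonneg _).trans (hcon (Classical.arbitrary α))
    have := pow_le_pow_left₀ (apply_nonneg q z) h1 2
    rw [Real.sq_sqrt h0] at this
    linarith
  rw [Metric.tendsto_atTop] at hu ⊢
  intro ε hε
  have hη : 0 < min (δ / 4) (c * ε / 8) := by positivity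
  set η := min (δ / 4) (c * ε / 8) with hηdef
  obtain ⟨K, hK⟩ := hu η hη
  refine ⟨K, fun k hk => ?_⟩
  have hk' := hK k hk
  rw [Real.dist_0_eq_abs, abs_of_nonneg (defect_nonneg _ _ _)] at hk' ⊢
  obtain ⟨a, ha⟩ := happrox (u k + v) η hη
  have d1 := hle2 a (u k)
  have d2 := hle2 a v
  have d3 := defect_nonneg (φ a) (u k) v
  have d4 := defect_nonneg (ψ a) (u k) v
  have d4' := mul_nonneg hc.le d4
  have d5 := hle2 a₀ v
  have e1 := hr a (u k)
  have e2 := hr a v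
  have e3 := hr a (u k + v)
  have e4 := hr a₀ v
  have e5 := hψ a
  have e6 := mul_nonneg hc.le (sq_nonneg (ψ a₀ v))
  have m1 : η ≤ δ / 4 := min_le_left _ _
  have m2 : η ≤ c * ε / 8 := min_le_right _ _
  unfold defect at *
  have haa : a = a₀ := by
    by_contra hne
    have := hφ a hne
    nlinarith
  subst haa
  have : c * (2 * ψ a (u k) ^ 2 + 2 * ψ a v ^ 2 - ψ a (u k + v) ^ 2) < c * ε := by nlinarith
  exact lt_of_mul_lt_mul_left this hc.le

end Abstract

/-! ### Pointwise lower semicontinuity and basic seminorms on `C(X)` -/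

section Concrete

variable {X Y : Type} [TopologicalSpace X] [CompactSpace X] [TopologicalSpace Y]

/-- The topology of pointwise convergence on `C(X, ℝ)`. It is not registered as an instance, as
`C(X, ℝ)` already carries the norm topology. -/
abbrev pw (X : Type) [TopologicalSpace X] : TopologicalSpace C(X, ℝ) :=
  TopologicalSpace.induced (fun g : C(X, ℝ) => (g : X → ℝ)) inferInstance

/-- Lower semicontinuity with respect to the topology of pointwise convergence. -/
def PLsc (p : C(X, ℝ) → ℝ) : Prop := @LowerSemicontinuous C(X, ℝ) ℝ (pw X) _ p

lemma pw_continuous_eval (x : X) : @Continuous _ _ (pw X) _ fun g : C(X, ℝ) => g x :=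
  let _ := pw X
  (continuous_apply x).comp (continuous_induced_dom (f := fun g : C(X, ℝ) => (g : X → ℝ)))

lemma PLsc.exists_finset {p : C(X, ℝ) → ℝ} (hp : PLsc p) (g : C(X, ℝ)) (c : ℝ) (hc : c < p g) :
    ∃ (F : Finset X) (ε : ℝ), 0 < ε ∧
      ∀ h : C(X, ℝ), (∀ x ∈ F, |h x - g x| < ε) → c < p h := by
  have h1 : {h | c < p h} ∈ @nhds _ (pw X) g := hp g c hc
  have h2 : @nhds _ (pw X) g = comap (fun g : C(X, ℝ) => (g : X → ℝ)) (𝓝 (g : X → ℝ)) :=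
    nhds_induced _ _
  rw [h2, nhds_pi] at h1
  obtain ⟨t, ht, hts⟩ := h1
  obtain ⟨⟨I, r⟩, ⟨hI, hr⟩, hsub⟩ :=
    (hasBasis_pi fun x => Metric.nhds_basis_ball (x := g x)).mem_iff.1 ht
  have hev : ∀ᶠ ε in 𝓝[>] (0 : ℝ), ∀ i ∈ I, ε < r i :=
    (eventually_all_finite hI).2 fun i hi =>
      (eventually_lt_nhds (hr i hi)).filter_mono nhdsWithin_le_nhds
  obtain ⟨ε, hε, hε0⟩ := (hev.and self_mem_nhdsWithin).exists
  refine ⟨hI.toFinset, ε, hε0, fun h hh => hts (hsub fun i hi => ?_)⟩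
  have := hh i (hI.mem_toFinset.2 hi)
  rw [Metric.mem_ball, Real.dist_eq]
  exact this.trans (hε i hi)

lemma plsc_norm_comp [Nonempty X] (T : C(X, ℝ) → C(X, ℝ))
    (hT : ∀ x, @Continuous _ _ (pw X) _ fun g => T g x) : PLsc fun g => ‖T g‖ := by
  have : (fun g => ‖T g‖) = fun g => ⨆ x, ‖T g x‖ := by
    ext g; exact ContinuousMap.norm_eq_iSup_norm _
  rw [this]
  let _ := pw X
  refine lowerSemicontinuous_ciSup (fun g => ⟨‖T g‖, ?_⟩) fun x => ?_
  · rintro _ ⟨x, rfl⟩; exact ContinuousMap.norm_coe_le_norm _ x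
  · exact (hT x).norm.lowerSemicontinuous

/-- The distance between the values of a function at two given points, as a seminorm. -/
noncomputable def evalDiff (x x' : X) : Seminorm ℝ C(X, ℝ) :=
  (normSeminorm ℝ ℝ).comp
    ({ toFun := fun g => g x - g x'
       map_add' := fun g h => by simp; ring
       map_smul' := fun a g => by simp; ring } : C(X, ℝ) →ₗ[ℝ] ℝ)

lemma evalDiff_apply (x x' : X) (g : C(X, ℝ)) : evalDiff x x' g = |g x - g x'| := rfl

lemma evalDiff_le (x x' : X) (g : C(X, ℝ)) : evalDiff x x' g ≤ 2 * ‖g‖ := by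
  have h1 := g.norm_coe_le_norm x
  have h2 := g.norm_coe_le_norm x'
  rw [evalDiff_apply]
  calc |g x - g x'| ≤ |g x| + |g x'| := abs_sub _ _
    _ ≤ 2 * ‖g‖ := by rw [← Real.norm_eq_abs, ← Real.norm_eq_abs]; linarith

/-- The seminorm `g ↦ |g x|`. -/
noncomputable def evalAbs (x : X) : Seminorm ℝ C(X, ℝ) :=
  (normSeminorm ℝ ℝ).comp
    ({ toFun := fun g => g x
       map_add' := fun _ _ => rfl
       map_smul' := fun _ _ => rfl } : C(X, ℝ) →ₗ[ℝ] ℝ)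

lemma evalAbs_apply (x : X) (g : C(X, ℝ)) : evalAbs x g = |g x| := rfl

lemma defect_evalAbs (x : X) (u v : C(X, ℝ)) : defect (evalAbs x) u v = (u x - v x) ^ 2 := by
  simp only [defect, evalAbs_apply, sq_abs, ContinuousMap.add_apply]
  ring

/-- The seminorm `g ↦ ‖g - (g x / h x) • h‖`, used with `|h x| = ‖h‖`: it is then a homogeneous
substitute for `g ↦ ‖g - h‖`. For `h x = 0` the quotient is `0` and the seminorm is the norm. -/
noncomputable def proj (h : C(X, ℝ)) (x : X) : Seminorm ℝ C(X, ℝ) :=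
  (normSeminorm ℝ C(X, ℝ)).comp
    ({ toFun := fun g => g - (g x / h x) • h
       map_add' := fun g k => by
         ext z; simp; ring
       map_smul' := fun a g => by
         ext z; simp; ring } : C(X, ℝ) →ₗ[ℝ] C(X, ℝ))

lemma proj_apply (h : C(X, ℝ)) (x : X) (g : C(X, ℝ)) : proj h x g = ‖g - (g x / h x) • h‖ := rfl

lemma norm_div_smul_le {h : C(X, ℝ)} {x : X} (hx : |h x| = ‖h‖) (t : ℝ) :
    ‖(t / h x) • h‖ ≤ |t| := by
  rw [norm_smul, Real.norm_eq_abs, abs_div, hx]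
  rcases eq_or_ne ‖h‖ 0 with h0 | h0
  · simp [h0]
  · rw [div_mul_cancel₀ _ h0]

lemma proj_le {h : C(X, ℝ)} {x : X} (hx : |h x| = ‖h‖) (g : C(X, ℝ)) :
    proj h x g ≤ 2 * ‖g‖ := by
  have h1 := norm_sub_le g ((g x / h x) • h)
  have h2 := norm_div_smul_le hx (g x)
  have h3 : |g x| ≤ ‖g‖ := g.norm_coe_le_norm x
  rw [proj_apply]; linarith

/-- As `proj h x` vanishes at `h`, its value at `g` is its value at `g - h`. -/
lemma proj_le_dist {h : C(X, ℝ)} {x : X} (hx : |h x| = ‖h‖) (g : C(X, ℝ)) :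
    proj h x g ≤ 2 * ‖g - h‖ := by
  have e : proj h x g = proj h x (g - h) := by
    rw [proj_apply, proj_apply]
    by_cases h0 : h x = 0
    · have : h = 0 := by rw [← norm_eq_zero, ← hx, h0, abs_zero]
      simp [this]
    · congr 1
      ext z
      simp
      field_simp
      ring
  rw [e]; exact proj_le hx _

lemma norm_sub_le_proj {h : C(X, ℝ)} {x : X} (hx : |h x| = ‖h‖) (u v : C(X, ℝ)) :
    ‖u - v‖ ≤ proj h x u + proj h x v + |u x - v x| := by
  have h2 := norm_div_smul_le hx (u x - v x)
  have e : u - v = (u - (u x / h x) • h) - (v - (v x / h x) • h) + ((u x - v x) / h x) • h := by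
    ext z; simp; ring
  calc ‖u - v‖ = ‖(u - (u x / h x) • h) - (v - (v x / h x) • h) + ((u x - v x) / h x) • h‖ :=
        congrArg _ e
    _ ≤ proj h x u + proj h x v + |u x - v x| :=
      (norm_add_le _ _).trans (add_le_add (norm_sub_le _ _) h2)

lemma exists_abs_eq_norm [Nonempty X] (h : C(X, ℝ)) : ∃ x, |h x| = ‖h‖ := by
  obtain ⟨x, -, hx⟩ := isCompact_univ.exists_isMaxOn univ_nonempty
    (map_continuous h).norm.continuousOn
  refine ⟨x, le_antisymm (h.norm_coe_le_norm x) ?_⟩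
  exact (ContinuousMap.norm_le _ (abs_nonneg _)).2 fun z => hx (mem_univ z)

/-! ### Oscillation on the fibers -/

variable (f : C(X, Y))

/-- The oscillation of a function on the fiber of `f` over `y`, as a seminorm on `C(X, ℝ)`. -/
noncomputable def osc (y : Y) : Seminorm ℝ C(X, ℝ) :=
  ⨆ z : (f ⁻¹' {y} : Set X) × (f ⁻¹' {y} : Set X), evalDiff (z.1 : X) (z.2 : X)

lemma osc_apply (y : Y) (g : C(X, ℝ)) :
    osc f y g = ⨆ z : (f ⁻¹' {y} : Set X) × (f ⁻¹' {y} : Set X),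
      evalDiff (z.1 : X) (z.2 : X) g :=
  Seminorm.iSup_apply (Seminorm.bddAbove_range_iff.2 fun g =>
    ⟨2 * ‖g‖, by rintro _ ⟨z, rfl⟩; exact evalDiff_le _ _ _⟩)

lemma osc_le (y : Y) (g : C(X, ℝ)) : osc f y g ≤ 2 * ‖g‖ := by
  rw [osc_apply]
  exact Real.iSup_le (fun z => evalDiff_le _ _ _) (by positivity)

lemma le_osc (g : C(X, ℝ)) {x x' : X} (h : f x = f x') : |g x - g x'| ≤ osc f (f x') g := by
  rw [osc_apply]
  exact le_ciSup (f := fun z : (f ⁻¹' {f x'} : Set X) × (f ⁻¹' {f x'} : Set X) =>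
    evalDiff (z.1 : X) (z.2 : X) g)
    ⟨2 * ‖g‖, by rintro _ ⟨z, rfl⟩; exact evalDiff_le _ _ _⟩ (⟨x, h⟩, ⟨x', rfl⟩)

lemma plsc_osc (y : Y) : PLsc (osc f y) := by
  have : ⇑(osc f y) = fun g => ⨆ z : (f ⁻¹' {y} : Set X) × (f ⁻¹' {y} : Set X),
      evalDiff (z.1 : X) (z.2 : X) g := funext (osc_apply f y)
  rw [this]
  let _ := pw X
  refine lowerSemicontinuous_ciSup (fun g => ⟨2 * ‖g‖, ?_⟩) fun z => ?_
  · rintro _ ⟨z, rfl⟩; exact evalDiff_le _ _ _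
  · exact ((pw_continuous_eval (z.1 : X)).sub (pw_continuous_eval (z.2 : X))).abs.lowerSemicontinuous

/-- If `g` oscillates by at least `ε` on a fiber, that fiber meets both `{g ≤ k * ε / 4}` and
`{(k + 1) * ε / 4 ≤ g}` for one of finitely many integers `k`; full closedness allows only finitely
many such fibers for each `k`. -/
lemma finite_osc_ge (hsurj : Function.Surjective f)
    (hfc : ∀ F₁ F₂ : Set X, IsClosed F₁ → IsClosed F₂ → Disjoint F₁ F₂ →
      (f '' F₁ ∩ f '' F₂).Finite) (g : C(X, ℝ)) {ε : ℝ} (hε : 0 < ε) :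
    {y | ε ≤ osc f y g}.Finite := by
  set η := ε / 4 with hη
  have hη0 : 0 < η := by positivity
  have hfin : (⋃ k ∈ Finset.Icc ⌈-‖g‖ / η⌉ ⌈‖g‖ / η⌉,
      f '' {x | g x ≤ k * η} ∩ f '' {x | (k + 1) * η ≤ g x}).Finite := by
    refine Set.Finite.biUnion (Finset.finite_toSet _) fun k _ => hfc _ _ ?_ ?_ ?_
    · exact isClosed_le (map_continuous g) continuous_const
    · exact isClosed_le continuous_const (map_continuous g)
    · rw [Set.disjoint_left]
      intro x (h1 : g x ≤ k * η) (h2 : (k + 1) * η ≤ g x)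
      linarith
  refine hfin.subset fun y (hy : ε ≤ osc f y g) => ?_
  obtain ⟨x₀, hx₀⟩ := hsurj y
  have : Nonempty ((f ⁻¹' {y} : Set X) × (f ⁻¹' {y} : Set X)) := ⟨⟨x₀, hx₀⟩, ⟨x₀, hx₀⟩⟩
  rw [osc_apply] at hy
  obtain ⟨⟨⟨x, hx⟩, ⟨x', hx'⟩⟩, hlt⟩ := exists_lt_of_lt_ciSup (lt_of_lt_of_le (half_lt_self hε) hy)
  change ε / 2 < |g x - g x'| at hlt
  wlog hxx : g x' ≤ g x generalizing x x'
  · exact this x' hx' x hx (by rwa [abs_sub_comm]) (le_of_not_ge hxx)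
  rw [abs_of_nonneg (by linarith)] at hlt
  have b := abs_le.1 (g.norm_coe_le_norm x')
  have c1 := Int.le_ceil (g x' / η)
  have c2 := Int.ceil_lt_add_one (g x' / η)
  rw [div_le_iff₀ hη0] at c1
  have c2' : (⌈g x' / η⌉ : ℝ) * η < g x' + η := by
    calc (⌈g x' / η⌉ : ℝ) * η < (g x' / η + 1) * η := by gcongr
      _ = g x' + η := by field_simp
  simp only [Set.mem_iUnion, Finset.mem_Icc]
  refine ⟨⌈g x' / η⌉, ⟨Int.ceil_le_ceil (by gcongr; exact b.1),
    Int.ceil_le_ceil (by gcongr; exact b.2)⟩, ⟨x', c1, hx'⟩, ⟨x, ?_, hx⟩⟩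
  change ((⌈g x' / η⌉ : ℝ) + 1) * η ≤ g x
  linarith

/-! ### Countable approximation off a finite set of fibers -/

lemma exists_countable_fiber_dense [T2Space Y] (y : Y)
    (hy : TopologicalSpace.MetrizableSpace (f ⁻¹' {y} : Set X)) :
    ∃ S : Set C(X, ℝ), S.Countable ∧
      ∀ (g : C(X, ℝ)) (ε : ℝ), 0 < ε → ∃ s ∈ S, ∀ x, f x = y → |g x - s x| < ε := by
  have hK : IsClosed (f ⁻¹' {y} : Set X) := isClosed_singleton.preimage (map_continuous f)
  have : CompactSpace (f ⁻¹' {y} : Set X) := isCompact_iff_compactSpace.1 hK.isCompact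
  have : SecondCountableTopology (f ⁻¹' {y} : Set X) := by
    let _ := TopologicalSpace.metrizableSpaceMetric (f ⁻¹' {y} : Set X)
    infer_instance
  let R : Set C((f ⁻¹' {y} : Set X), ℝ) :=
    range fun g : C(X, ℝ) => g.restrict (f ⁻¹' {y})
  obtain ⟨t, htR, htc, hRt⟩ :=
    (TopologicalSpace.IsSeparable.of_separableSpace R).exists_countable_dense_subset
  have htR' : ∀ s ∈ t, ∃ k : C(X, ℝ), k.restrict (f ⁻¹' {y}) = s := fun s hs => htR hs
  choose! e he using htR'
  refine ⟨e '' t, htc.image _, fun g ε hε => ?_⟩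
  obtain ⟨s, hs, hgs⟩ := Metric.mem_closure_iff.1 (hRt ⟨g, rfl⟩) ε hε
  refine ⟨e s, ⟨s, hs, rfl⟩, fun x hx => ?_⟩
  have h1 := (ContinuousMap.dist_apply_le_dist (f := g.restrict (f ⁻¹' {y})) (g := s)
    ⟨x, hx⟩).trans_lt hgs
  have h2 : s ⟨x, hx⟩ = e s x := by
    conv_lhs => rw [← he s hs]
    rfl
  rw [h2, Real.dist_eq] at h1
  exact h1

/-- If on every fiber `g` is `ε`-close to some member of `U`, then `g` is globally `ε`-close to a
combination of members of `U` with coefficients from a partition of unity on `Y`. -/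
lemma exists_glue [CompactSpace Y] [T2Space Y] (U : Set C(X, ℝ)) (g : C(X, ℝ)) {ε : ℝ}
    (hε : 0 < ε) (hU : ∀ y, ∃ u ∈ U, ∀ x, f x = y → |g x - u x| < ε) :
    ∃ h ∈ Submodule.span ℝ (⋃ u : U, range fun p : C(Y, ℝ) => p.comp f * (u : C(X, ℝ))),
      ‖g - h‖ ≤ ε := by
  choose u huU hu using hU
  -- `W y` is the set of points over whose whole fiber `u y` is `ε`-close to `g`; it is open since
  -- `f` is a closed map.
  let W : Y → Set Y := fun y => (f '' {x | |g x - u y x| < ε}ᶜ)ᶜ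
  have hWo : ∀ y, IsOpen (W y) := fun y => by
    have : IsOpen {x | |g x - u y x| < ε} :=
      isOpen_lt ((map_continuous g).sub (map_continuous (u y))).abs continuous_const
    exact ((map_continuous f).isClosedMap _ this.isClosed_compl).isOpen_compl
  have hWmem : ∀ y, y ∈ W y := by
    rintro y ⟨x, hx, hxy⟩
    exact hx (hu y x hxy)
  obtain ⟨t, ht⟩ := isCompact_univ.elim_finite_subcover W hWo
    fun y _ => mem_iUnion.2 ⟨y, hWmem y⟩
  obtain ⟨ρ, hρ⟩ := PartitionOfUnity.exists_isSubordinate (isClosed_univ (X := Y))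
    (fun i : t => W i) (fun i => hWo i) (by
      intro y hy
      obtain ⟨i, hi, hy'⟩ := mem_iUnion₂.1 (ht hy)
      exact mem_iUnion.2 ⟨⟨i, hi⟩, hy'⟩)
  refine ⟨∑ i : t, (ρ i).comp f * u i, Submodule.sum_mem _ fun i _ => Submodule.subset_span
    (mem_iUnion.2 ⟨⟨u i, huU i⟩, ⟨ρ i, rfl⟩⟩), ?_⟩
  refine (ContinuousMap.norm_le _ hε.le).2 fun x => ?_
  have h1 : ∑ i : t, ρ i (f x) = 1 := by
    rw [← finsum_eq_sum_of_fintype]; exact ρ.sum_eq_one (mem_univ _)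
  have h2 : (g - ∑ i : t, (ρ i).comp f * u i) x = ∑ i : t, ρ i (f x) * (g x - u i x) := by
    simp only [ContinuousMap.sub_apply, ContinuousMap.sum_apply, ContinuousMap.mul_apply,
      ContinuousMap.comp_apply, mul_sub, Finset.sum_sub_distrib, ← Finset.sum_mul, h1, one_mul]
  rw [h2]
  calc ‖∑ i : t, ρ i (f x) * (g x - u i x)‖ ≤ ∑ i : t, ρ i (f x) * ε := by
        refine norm_sum_le_of_le _ fun i _ => ?_
        rw [norm_mul, Real.norm_of_nonneg (ρ.nonneg i _)]
        by_cases h0 : ρ i (f x) = 0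
        · simp [h0]
        · refine mul_le_mul_of_nonneg_left ?_ (ρ.nonneg i _)
          have hW : f x ∈ W i := hρ i (subset_closure h0)
          by_contra hcon
          exact hW ⟨x, fun hlt => hcon (le_of_lt hlt), rfl⟩
    _ = ε := by rw [← Finset.sum_mul, h1, one_mul]

/-- For a finite set `A` there is a sequence in `C(X, ℝ)` that approximates, up to `2 * ε`, all
functions with oscillation less than `ε` on the fibers outside `A`. -/
lemma exists_seq_approx [CompactSpace Y] [T2Space Y] [TopologicalSpace.MetrizableSpace Y]
    (hsurj : Function.Surjective f)
    (hfib : ∀ y : Y, TopologicalSpace.MetrizableSpace (f ⁻¹' {y} : Set X)) (A : Finset Y) :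
    ∃ H : ℕ → C(X, ℝ), ∀ (g : C(X, ℝ)) (ε : ℝ), 0 < ε → (∀ y ∉ A, osc f y g < ε) →
      ∃ j, ‖g - H j‖ ≤ 2 * ε := by
  have : SecondCountableTopology Y := by
    let _ := TopologicalSpace.metrizableSpaceMetric Y
    infer_instance
  choose S hSc hS using fun y => exists_countable_fiber_dense f y (hfib y)
  let U : Set C(X, ℝ) := (⋃ y ∈ A, S y) ∪ range fun q : ℚ => ContinuousMap.const X (q : ℝ)
  have hUc : U.Countable :=
    (A.countable_toSet.biUnion fun y _ => hSc y).union (countable_range _)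
  have : Countable U := hUc
  have hsep : TopologicalSpace.IsSeparable
      (⋃ u : U, range fun p : C(Y, ℝ) => p.comp f * (u : C(X, ℝ))) := by
    refine .iUnion fun u => TopologicalSpace.isSeparable_range ?_
    exact (ContinuousMap.continuous_precomp f).mul continuous_const
  obtain ⟨c, hc, hcd⟩ := hsep.span (R := ℝ)
  have hne : c.Nonempty := closure_nonempty_iff.1 ⟨0, hcd (Submodule.zero_mem _)⟩
  obtain ⟨H, rfl⟩ := hc.exists_eq_range hne
  refine ⟨H, fun g ε hε hosc => ?_⟩
  obtain ⟨h, hh, hgh⟩ := exists_glue f U g hε fun y => by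
    by_cases hy : y ∈ A
    · obtain ⟨s, hs, hgs⟩ := hS y g ε hε
      exact ⟨s, Or.inl (mem_biUnion hy hs), hgs⟩
    · obtain ⟨x₀, rfl⟩ := hsurj y
      have hlt := hosc _ hy
      obtain ⟨q, hq1, hq2⟩ := exists_rat_btwn (show g x₀ < g x₀ + (ε - osc f (f x₀) g) by linarith)
      refine ⟨_, Or.inr ⟨q, rfl⟩, fun x hx => ?_⟩
      have h1 := abs_le.1 (le_osc f g hx)
      rw [ContinuousMap.const_apply, abs_lt]
      constructor <;> linarith
  obtain ⟨_, ⟨j, rfl⟩, hj⟩ := Metric.mem_closure_iff.1 (hcd hh) ε hε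
  refine ⟨j, ?_⟩
  rw [dist_eq_norm] at hj
  have := norm_sub_le_norm_sub_add_norm_sub g h (H j)
  linarith


/-! ### The seminorms attached to finite sets of fibers -/

lemma plsc_of_hasSum {ι : Type*} {w : ι → ℝ} (hw0 : ∀ i, 0 ≤ w i)
    {p : ι → Seminorm ℝ C(X, ℝ)} {q : Seminorm ℝ C(X, ℝ)}
    (h : ∀ v, HasSum (fun i => w i * p i v ^ 2) (q v ^ 2))
    (hp : ∀ i, PLsc (p i)) : PLsc q :=
  let _ := pw X
  lsc_of_hasSum hw0 h hp

lemma plsc_proj [Nonempty X] (h : C(X, ℝ)) (x : X) : PLsc (proj h x) := by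
  refine plsc_norm_comp (fun g => g - (g x / h x) • h) fun z => ?_
  let _ := pw X
  exact (pw_continuous_eval z).sub (((pw_continuous_eval x).div_const _).mul continuous_const)

lemma plsc_evalAbs (x : X) : PLsc (evalAbs x) :=
  let _ := pw X
  (pw_continuous_eval x).abs.lowerSemicontinuous

/-- A seminorm, depending only on the finite set `A`, that is locally uniformly rotund up to `10 * ε`
at every function with oscillation less than `ε` on the fibers outside `A`. -/
lemma exists_psi [Nonempty X] [CompactSpace Y] [T2Space Y] [TopologicalSpace.MetrizableSpace Y]
    (hsurj : Function.Surjective f)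
    (hfib : ∀ y : Y, TopologicalSpace.MetrizableSpace (f ⁻¹' {y} : Set X)) (A : Finset Y) :
    ∃ ψ : Seminorm ℝ C(X, ℝ), PLsc ψ ∧ (∀ g, ψ g ≤ 2 * ‖g‖) ∧
      ∀ (g : C(X, ℝ)) (ε : ℝ), 0 < ε → (∀ y ∉ A, osc f y g < ε) → ∀ u : ℕ → C(X, ℝ),
        Tendsto (fun k => defect ψ (u k) g) atTop (𝓝 0) → ∀ᶠ k in atTop, ‖u k - g‖ ≤ 10 * ε := by
  obtain ⟨H, hH⟩ := exists_seq_approx f hsurj hfib A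
  choose x hx using fun j => exists_abs_eq_norm (H j)
  obtain ⟨w, hw0, S, hwS, hS⟩ := posSumOfEncodable zero_lt_one (ℕ × Bool)
  let p : ℕ × Bool → Seminorm ℝ C(X, ℝ) := fun i =>
    if i.2 then proj (H i.1) (x i.1) else evalAbs (x i.1)
  have hpB : ∀ i g, p i g ≤ 2 * ‖g‖ := by
    rintro ⟨j, _ | _⟩ g
    · have : |g (x j)| ≤ ‖g‖ := g.norm_coe_le_norm _
      have h0 := norm_nonneg g
      change |g (x j)| ≤ _
      linarith
    · exact proj_le (hx j) g
  obtain ⟨ψ, hψB, hψ⟩ := exists_l2_sum w (fun i => (hw0 i).le) hwS hS p (fun g => 2 * ‖g‖)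
    (fun g => by positivity) hpB
  refine ⟨ψ, plsc_of_hasSum (fun i => (hw0 i).le) hψ ?_, hψB, ?_⟩
  · rintro ⟨j, _ | _⟩
    · exact plsc_evalAbs (x j)
    · exact plsc_proj (H j) (x j)
  · intro g ε hε hosc u hu
    obtain ⟨j, hj⟩ := hH g ε hε hosc
    have t1 : Tendsto (fun k => defect (proj (H j) (x j)) (u k) g) atTop (𝓝 0) :=
      tendsto_defect_of_l2 hw0 hψ hu (j, true)
    have t2 : Tendsto (fun k => defect (evalAbs (x j)) (u k) g) atTop (𝓝 0) :=
      tendsto_defect_of_l2 hw0 hψ hu (j, false)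
    have hε2 : 0 < ε ^ 2 := by positivity
    filter_upwards [t1.eventually (gt_mem_nhds hε2), t2.eventually (gt_mem_nhds hε2)] with k h1 h2
    have h1' := abs_lt_of_sq_lt_sq ((sq_sub_le_defect _ _ _).trans_lt h1) hε.le
    rw [defect_evalAbs] at h2
    have h2' := abs_lt_of_sq_lt_sq h2 hε.le
    have h3 := norm_sub_le_proj (hx j) (u k) g
    have h4 := proj_le_dist (hx j) g
    have h5 := (abs_lt.1 h1').2
    linarith

/-- The set of fibers with oscillation at least `ε` is the unique maximizer of the total oscillation
among sets of at most the same cardinality, with a positive gap `δ`. -/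
lemma exists_gap (hsurj : Function.Surjective f)
    (hfc : ∀ F₁ F₂ : Set X, IsClosed F₁ → IsClosed F₂ → Disjoint F₁ F₂ →
      (f '' F₁ ∩ f '' F₂).Finite) (g : C(X, ℝ)) {ε : ℝ} (hε : 0 < ε) :
    ∃ A₀ : Finset Y, (∀ y ∉ A₀, osc f y g < ε) ∧ ∃ δ > 0, ∀ A : Finset Y, A.card ≤ A₀.card →
      A ≠ A₀ → ∑ y ∈ A, osc f y g + δ ≤ ∑ y ∈ A₀, osc f y g := by
  classical
  have hfin := finite_osc_ge f hsurj hfc g hε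
  have hfin2 := finite_osc_ge f hsurj hfc g (half_pos hε)
  -- Oscillations below `ε` stay below some `β < ε`, because only finitely many exceed `ε / 2`.
  obtain ⟨β, hβ0, hβε, hβ⟩ : ∃ β, 0 ≤ β ∧ β < ε ∧ ∀ y, osc f y g < ε → osc f y g ≤ β := by
    have hev : ∀ᶠ β in 𝓝[<] ε, ∀ y ∈ {y | ε / 2 ≤ osc f y g}, osc f y g < ε → osc f y g ≤ β := by
      refine (eventually_all_finite hfin2).2 fun y _ => ?_
      by_cases h : osc f y g < ε
      · filter_upwards [(eventually_gt_nhds h).filter_mono nhdsWithin_le_nhds] with β hβ _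
        exact hβ.le
      · exact Eventually.of_forall fun β h' => absurd h' h
    obtain ⟨β, ⟨h1, h2⟩, h3⟩ := ((hev.and ((eventually_gt_nhds (half_lt_self hε)).filter_mono
      nhdsWithin_le_nhds)).and self_mem_nhdsWithin).exists
    refine ⟨β, by linarith, h3, fun y hy => ?_⟩
    by_cases hy2 : ε / 2 ≤ osc f y g
    · exact h1 y hy2 hy
    · linarith
  refine ⟨hfin.toFinset, fun y hy => by simpa using hy, ε - β, by linarith, fun A hA hne => ?_⟩
  set A₀ := hfin.toFinset with hA₀
  have hcard : (A \ A₀).card ≤ (A₀ \ A).card := by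
    have h1 := Finset.card_sdiff_add_card_inter A A₀
    have h2 := Finset.card_sdiff_add_card_inter A₀ A
    rw [Finset.inter_comm] at h2
    omega
  have hpos : 1 ≤ (A₀ \ A).card := by
    rw [Nat.one_le_iff_ne_zero, Finset.card_ne_zero, Finset.sdiff_nonempty]
    intro hsub
    exact hne (Finset.eq_of_subset_of_card_le hsub hA).symm
  have s1 : ∑ y ∈ A \ A₀, osc f y g ≤ (A \ A₀).card • β :=
    Finset.sum_le_card_nsmul _ _ _ fun y hy => hβ y (by
      have := (Finset.mem_sdiff.1 hy).2
      simpa [hA₀] using this)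
  have s2 : (A₀ \ A).card • ε ≤ ∑ y ∈ A₀ \ A, osc f y g :=
    Finset.card_nsmul_le_sum _ _ _ fun y hy => by
      have := (Finset.mem_sdiff.1 hy).1
      simpa [hA₀] using this
  have e1 := Finset.sum_inter_add_sum_sdiff A A₀ fun y => osc f y g
  have e2 := Finset.sum_inter_add_sum_sdiff A₀ A fun y => osc f y g
  rw [Finset.inter_comm] at e2
  rw [nsmul_eq_mul] at s1 s2
  have hcard' : ((A \ A₀).card : ℝ) ≤ (A₀ \ A).card := by exact_mod_cast hcard
  have hpos' : (1 : ℝ) ≤ (A₀ \ A).card := by exact_mod_cast hpos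
  have k1 : ((A \ A₀).card : ℝ) * β ≤ (A₀ \ A).card * β := by gcongr
  have k2 : ε - β ≤ (A₀ \ A).card * (ε - β) := le_mul_of_one_le_left (by linarith) hpos'
  linarith

/-- The total oscillation over `A`, normalized by `n + 1` so that the bound `2 * ‖g‖` does not
depend on `n`. -/
lemma exists_phi (n : ℕ) (A : Finset Y) (hA : A.card ≤ n) :
    ∃ φ : Seminorm ℝ C(X, ℝ), PLsc φ ∧ (∀ g, φ g ≤ 2 * ‖g‖) ∧
      ∀ g, φ g = (∑ y ∈ A, osc f y g) / (n + 1) := by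
  let T : Seminorm ℝ C(X, ℝ) := ((n + 1 : NNReal)⁻¹) • ∑ y ∈ A, osc f y
  have hT : ∀ g, T g = (∑ y ∈ A, osc f y g) / (n + 1) := by
    intro g
    have : (∑ y ∈ A, osc f y) g = ∑ y ∈ A, osc f y g := by
      simp
    rw [smul_apply, this, NNReal.smul_def, smul_eq_mul, div_eq_inv_mul]
    simp
  have hn : (0 : ℝ) < n + 1 := by positivity
  refine ⟨T, ?_, fun g => ?_, hT⟩
  · have e : ⇑T = (fun t : ℝ => t / (n + 1)) ∘ fun g => ∑ y ∈ A, osc f y g := funext hT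
    rw [e]
    let _ := pw X
    refine Continuous.comp_lowerSemicontinuous (by fun_prop)
      (lowerSemicontinuous_sum fun y _ => plsc_osc f y) fun a b hab => ?_
    change a / _ ≤ b / _
    gcongr
  · rw [hT, div_le_iff₀ hn]
    have h1 : ∑ y ∈ A, osc f y g ≤ A.card • (2 * ‖g‖) :=
      Finset.sum_le_card_nsmul _ _ _ fun y _ => osc_le f y g
    have h2 : (A.card : ℝ) ≤ n + 1 := by exact_mod_cast hA.trans (Nat.le_succ n)
    rw [nsmul_eq_mul] at h1
    have h3 : (A.card : ℝ) * (2 * ‖g‖) ≤ (n + 1) * (2 * ‖g‖) := by gcongr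
    linarith


/-- The supremum `q` over all `A` with `card A ≤ n` of `(φ_A² + ψ_A² / (m + 1)) / 2`, under a square
root. If the set `A₀` of cardinality `n` is the gapped maximizer of the total oscillation of `g` and
`m` is large compared to the gap `δ`, then a vanishing defect of `q` forces `10 * ε`-closeness. -/
lemma exists_layer [Nonempty X] [CompactSpace Y] [T2Space Y]
    [TopologicalSpace.MetrizableSpace Y] (hsurj : Function.Surjective f)
    (hfib : ∀ y : Y, TopologicalSpace.MetrizableSpace (f ⁻¹' {y} : Set X)) (n m : ℕ) :
    ∃ q : Seminorm ℝ C(X, ℝ), PLsc q ∧ (∀ g, q g ≤ 2 * ‖g‖) ∧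
      ∀ (g : C(X, ℝ)) (ε δ : ℝ) (A₀ : Finset Y), 0 < ε → 0 < δ → A₀.card = n →
        (∀ y ∉ A₀, osc f y g < ε) →
        (∀ A : Finset Y, A.card ≤ n → A ≠ A₀ →
          ∑ y ∈ A, osc f y g + δ ≤ ∑ y ∈ A₀, osc f y g) →
        8 * (n + 1) ^ 2 * ‖g‖ ^ 2 ≤ δ ^ 2 * (m + 1) →
        ∀ u : ℕ → C(X, ℝ), Tendsto (fun k => defect q (u k) g) atTop (𝓝 0) →
          ∀ᶠ k in atTop, ‖u k - g‖ ≤ 10 * ε := by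
  let α := {A : Finset Y // A.card ≤ n}
  have : Nonempty α := ⟨⟨∅, by simp⟩⟩
  choose φ hφl hφB hφ using fun a : α => exists_phi f n a.1 a.2
  choose ψ hψl hψB hψ using fun A => exists_psi f hsurj hfib A
  have hm : (0 : ℝ) < 1 / (m + 1) := by positivity
  have hm1 : (1 : ℝ) / (m + 1) ≤ 1 := by
    rw [div_le_one (by positivity)]
    linarith [(Nat.cast_nonneg m : (0 : ℝ) ≤ m)]
  choose r hrB hr hrl using fun a : α => exists_pair (1 / (m + 1)) hm hm1 (φ a) (ψ a.1)
    (fun g => 2 * ‖g‖) (fun g => by positivity) (hφB a) (hψB a.1)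
  have hbdd : ∀ g, BddAbove (range fun a => r a g) := fun g =>
    ⟨2 * ‖g‖, by rintro _ ⟨a, rfl⟩; exact hrB a g⟩
  have hq : ∀ g, (⨆ a, r a) g = ⨆ a, r a g := fun g =>
    Seminorm.iSup_apply (Seminorm.bddAbove_range_iff.2 hbdd)
  refine ⟨⨆ a, r a, ?_, fun g => ?_, ?_⟩
  · rw [show ⇑(⨆ a, r a) = fun g => ⨆ a, r a g from funext hq]
    let τ := pw X
    exact lowerSemicontinuous_ciSup hbdd fun a => @hrl a τ (hφl a) (hψl a.1)
  · rw [hq]; exact ciSup_le fun a => hrB a g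
  · intro g ε δ A₀ hε hδ hcard hosc hgap hm' u hu
    refine hψ A₀ g ε hε hosc u ?_
    have hn : (0 : ℝ) < n + 1 := by positivity
    have hm0 : (0 : ℝ) < m + 1 := by positivity
    refine tendsto_defect_of_sup φ (fun a : α => ψ a.1) r _ _ hrB hq hm hr
      (δ := δ ^ 2 / (n + 1) ^ 2 / 2) (by positivity) (fun a => ?_) ⟨A₀, hcard.le⟩
      (fun a ha => ?_) hu
    · have h1 : ψ a.1 g ^ 2 ≤ (2 * ‖g‖) ^ 2 :=
        pow_le_pow_left₀ (apply_nonneg _ _) (hψB a.1 g) 2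
      rw [one_div, inv_mul_le_iff₀ hm0, div_div, ← mul_div_assoc, le_div_iff₀ (by positivity)]
      nlinarith [mul_le_mul_of_nonneg_right h1 (by positivity : (0 : ℝ) ≤ (n + 1) ^ 2 * 2)]
    · have h1 := hgap a.1 a.2 fun h => ha (Subtype.ext h)
      have h0 : 0 ≤ ∑ y ∈ a.1, osc f y g := Finset.sum_nonneg fun y _ => apply_nonneg _ _
      rw [hφ, hφ, div_pow, div_pow, mul_div_cancel₀ _ two_ne_zero, ← add_div]
      gcongr
      nlinarith

end Concrete

end Fedorchuk

open Fedorchuk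

/-- **Main theorem.** If `X` is a Fedorchuk compact of spectral height at most 3, i.e. a compact
Hausdorff space admitting a fully closed continuous surjection `f` onto a metrizable compact
space `Y` with all fibers metrizable, then `C(X)` admits an equivalent locally uniformly rotund
norm which is lower semicontinuous for the topology of pointwise convergence. -/
theorem fedorchuk_height_three_LUR_renorming
    {X Y : Type} [TopologicalSpace X] [CompactSpace X] [T2Space X]
    [TopologicalSpace Y] [CompactSpace Y] [T2Space Y]
    [TopologicalSpace.MetrizableSpace Y]
    (f : C(X, Y)) (hsurj : Function.Surjective f)
    (hfc : ∀ F₁ F₂ : Set X, IsClosed F₁ → IsClosed F₂ → Disjoint F₁ F₂ →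
      (f '' F₁ ∩ f '' F₂).Finite)
    (hfib : ∀ y : Y, TopologicalSpace.MetrizableSpace (f ⁻¹' {y} : Set X)) :
    ∃ N : C(X, ℝ) → ℝ,
      -- (i) N is a norm
      (∀ g : C(X, ℝ), N g = 0 ↔ g = 0) ∧
      (∀ (a : ℝ) (g : C(X, ℝ)), N (a • g) = |a| * N g) ∧
      (∀ g h : C(X, ℝ), N (g + h) ≤ N g + N h) ∧
      -- (ii) N is equivalent to the supremum norm
      (∃ c C : ℝ, 0 < c ∧ 0 < C ∧
        ∀ g : C(X, ℝ), c * ‖g‖ ≤ N g ∧ N g ≤ C * ‖g‖) ∧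
      -- (iii) N is locally uniformly rotund
      (∀ (g : C(X, ℝ)) (gs : ℕ → C(X, ℝ)),
        N g = 1 → (∀ n : ℕ, N (gs n) = 1) →
        Filter.Tendsto (fun n => N (gs n + g)) Filter.atTop (nhds 2) →
        Filter.Tendsto (fun n => N (gs n - g)) Filter.atTop (nhds 0)) ∧
      -- (iv) N is lower semicontinuous for the pointwise topology
      (∀ (g : C(X, ℝ)) (c : ℝ), c < N g →
        ∃ (F : Finset X) (ε : ℝ), 0 < ε ∧
          ∀ h : C(X, ℝ), (∀ x ∈ F, |h x - g x| < ε) → c < N h) := by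
  rcases isEmpty_or_nonempty X with hX | hX
  · have hs : ∀ g : C(X, ℝ), g = 0 := fun g => ContinuousMap.ext fun x => hX.elim x
    refine ⟨fun _ => 0, fun g => by simp [hs g], by simp, by simp,
      ⟨1, 1, one_pos, one_pos, fun g => by simp [hs g]⟩, fun _ _ h => by simp at h, ?_⟩
    exact fun g c hc => ⟨∅, 1, one_pos, fun _ _ => hc⟩
  choose q hql hqB hq using fun i : ℕ × ℕ => exists_layer f hsurj hfib i.1 i.2
  obtain ⟨w, hw0, S, hwS, hS⟩ := posSumOfEncodable zero_lt_one (Option (ℕ × ℕ))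
  let p : Option (ℕ × ℕ) → Seminorm ℝ C(X, ℝ) := fun i =>
    i.elim (normSeminorm ℝ C(X, ℝ)) q
  have hpB : ∀ i g, p i g ≤ 2 * ‖g‖ := by
    rintro (_ | i) g
    · change ‖g‖ ≤ 2 * ‖g‖
      linarith [norm_nonneg g]
    · exact hqB i g
  obtain ⟨N, hNB, hN⟩ := exists_l2_sum w (fun i => (hw0 i).le) hwS hS p (fun g => 2 * ‖g‖)
    (fun g => by positivity) hpB
  have hlower : ∀ g, √(w none) * ‖g‖ ≤ N g := fun g => by
    refine (le_abs_self _).trans (abs_le_of_sq_le_sq ?_ (apply_nonneg _ _))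
    rw [mul_pow, Real.sq_sqrt (hw0 _).le]
    exact le_hasSum (hN g) none fun j _ => mul_nonneg (hw0 j).le (sq_nonneg _)
  have hw : 0 < √(w none) := Real.sqrt_pos.2 (hw0 _)
  refine ⟨N, fun g => ⟨fun h => ?_, fun h => by rw [h, map_zero]⟩, fun a g => map_smul_eq_mul N a g,
    map_add_le_add N, ⟨√(w none), 2, hw, two_pos, fun g => ⟨hlower g, hNB g⟩⟩, ?_, ?_⟩
  · have := hlower g
    rw [h] at this
    exact norm_le_zero_iff.1 (nonpos_of_mul_nonpos_right this hw)
  · intro g gs hg hgs hlim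
    have hdef : Tendsto (fun k => defect N (gs k) g) atTop (𝓝 0) := by
      have : Tendsto (fun k => (2 : ℝ) * 1 ^ 2 + 2 * 1 ^ 2 - N (gs k + g) ^ 2) atTop
          (𝓝 (2 * 1 ^ 2 + 2 * 1 ^ 2 - 2 ^ 2)) := (hlim.pow 2).const_sub _
      simp only [defect, hg, hgs]
      convert this using 2
      norm_num
    have hnorm : Tendsto (fun k => ‖gs k - g‖) atTop (𝓝 0) := by
      rw [Metric.tendsto_atTop']
      intro ε hε
      obtain ⟨A₀, hosc, δ, hδ, hgap⟩ := exists_gap f hsurj hfc g (ε := ε / 20) (by positivity)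
      obtain ⟨m, hm⟩ := exists_nat_ge (8 * ((A₀.card : ℝ) + 1) ^ 2 * ‖g‖ ^ 2 / δ ^ 2)
      have hm' : 8 * ((A₀.card : ℝ) + 1) ^ 2 * ‖g‖ ^ 2 ≤ δ ^ 2 * ((m : ℝ) + 1) := by
        rw [div_le_iff₀ (by positivity)] at hm
        nlinarith [sq_nonneg δ]
      have hev := hq (A₀.card, m) g (ε / 20) δ A₀ (by positivity) hδ rfl hosc hgap hm' gs
        (tendsto_defect_of_l2 hw0 hN hdef (some (A₀.card, m)))
      obtain ⟨K, hK⟩ := eventually_atTop.1 hev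
      refine ⟨K, fun k hk => ?_⟩
      rw [Real.dist_0_eq_abs, abs_norm]
      linarith [hK k hk.le]
    exact squeeze_zero (fun k => apply_nonneg _ _) (fun k => hNB _)
      (by simpa using hnorm.const_mul 2)
  · refine (plsc_of_hasSum (fun i => (hw0 i).le) hN ?_).exists_finset
    rintro (_ | i)
    · exact plsc_norm_comp (fun g => g) pw_continuous_eval
    · exact hql i
end

section
/- Let f : X → Y be a continuous surjection between compact Hausdorff spaces. Then the following are equivalent: (1) for every y ∈ Y and every finite family of open sets U₁, …, Uₙ ⊆ X with f⁻¹(y) ⊆ U₁ ∪ … ∪ Uₙ, the set {y} ∪ ⋃ᵢ f^#(Uᵢ) is a neighborhood of y in Y, where f^#(U) = {z ∈ Y : f⁻¹(z) ⊆ U}; (2) for every pair of disjoint closed subsets F₁, F₂ ⊆ X, the intersection f(F₁) ∩ f(F₂) is finite. -/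
/-!
(1) ⇒ (2): with `U₁ = F₁ᶜ`, `U₂ = F₂ᶜ`, which cover `X`, condition (1) at `y` says that `y` is
isolated in `K = f(F₁) ∩ f(F₂)`, or lies outside it. So the compact set `K` has no accumulation
point and must be finite.

(2) ⇒ (1): since `X` is normal, the cover `U` of the fibre over `y` shrinks to a cover by open
sets `V i` with `closure (V i) ⊆ U i`. As `f` is a closed map, the fibres over all `z` near `y`
still lie in `⋃ i, V i`. If such a `z` is in no `f^#(U i)`, then a point of its fibre lies in some
`V i`, so `z` belongs to `f(closure (V i)) ∩ f((U i)ᶜ)`, which is finite by (2). Hence only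
finitely many `z` near `y` are missed, and those different from `y` can be removed.
-/

/-- **Proposition 1.** For a continuous surjection `f : X → Y` of compact Hausdorff spaces,
the classical definition of full closedness via the sets `f^#(Uᵢ)` is equivalent to the
condition that `f(F₁) ∩ f(F₂)` is finite for all disjoint closed sets `F₁, F₂ ⊆ X`. -/
theorem fullyClosed_iff_finite_inter_images
    {X Y : Type} [TopologicalSpace X] [CompactSpace X] [T2Space X]
    [TopologicalSpace Y] [CompactSpace Y] [T2Space Y]
    (f : C(X, Y)) (hsurj : Function.Surjective f) :
    (∀ (y : Y) (n : ℕ) (U : Fin n → Set X),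
        (∀ i, IsOpen (U i)) → f ⁻¹' {y} ⊆ ⋃ i, U i →
        ({y} ∪ ⋃ i, {z : Y | f ⁻¹' {z} ⊆ U i}) ∈ nhds y)
      ↔
    (∀ F₁ F₂ : Set X, IsClosed F₁ → IsClosed F₂ → Disjoint F₁ F₂ →
        (f '' F₁ ∩ f '' F₂).Finite) := by
  constructor
  · intro h F₁ F₂ h₁ h₂ hd
    have hK : IsCompact (f '' F₁ ∩ f '' F₂) :=
      (h₁.isCompact.image f.continuous).inter (h₂.isCompact.image f.continuous)
    by_contra hinf
    obtain ⟨y, -, hy⟩ := Set.Infinite.exists_accPt_of_subset_isCompact hinf hK subset_rfl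
    have hn := h y 2 ![F₁ᶜ, F₂ᶜ]
      (by intro i; fin_cases i <;> simp [h₁, h₂])
      (by
        intro x _
        by_cases hx : x ∈ F₁
        · exact Set.mem_iUnion.2 ⟨1, fun hx' => Set.disjoint_left.1 hd hx hx'⟩
        · exact Set.mem_iUnion.2 ⟨0, hx⟩)
    obtain ⟨z, ⟨hzn, ⟨x₁, hx₁, e₁⟩, ⟨x₂, hx₂, e₂⟩⟩, hzy⟩ := accPt_iff_nhds.1 hy _ hn
    rcases hzn with hzn | hzn
    · exact hzy hzn
    · obtain ⟨i, hi⟩ := Set.mem_iUnion.1 hzn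
      fin_cases i
      · exact hi e₁ hx₁
      · exact hi e₂ hx₂
  · intro h y n U hU hcov
    obtain ⟨V, hVcov, hVo, hVU⟩ := exists_subset_iUnion_closure_subset
      (isClosed_singleton.preimage f.continuous) hU (fun _ _ => Set.toFinite _) hcov
    have hE : (⋃ i, f '' closure (V i) ∩ f '' (U i)ᶜ).Finite :=
      Set.finite_iUnion fun i => h _ _ isClosed_closure (hU i).isClosed_compl
        (Set.disjoint_left.2 fun x hx hx' => hx' (hVU i hx))
    set E := ⋃ i, f '' closure (V i) ∩ f '' (U i)ᶜ
    -- Neighbourhood of `y` over which the fibres stay inside `⋃ i, V i`.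
    have hN : (f '' (⋃ i, V i)ᶜ)ᶜ ∈ nhds y := by
      refine (f.continuous.isClosedMap _ (isOpen_iUnion hVo).isClosed_compl).isOpen_compl.mem_nhds
        ?_
      rintro ⟨x, hx, hxy⟩
      exact hx (hVcov hxy)
    have hE' : (E \ {y})ᶜ ∈ nhds y :=
      (hE.subset Set.diff_subset).isClosed.isOpen_compl.mem_nhds fun hy => hy.2 rfl
    filter_upwards [hN, hE'] with z hz hzE
    by_contra hcon
    have hzy : z ≠ y := fun e => hcon (Or.inl e)
    obtain ⟨x, rfl⟩ := hsurj z
    have hx : x ∈ ⋃ i, V i := by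
      by_contra hx
      exact hz ⟨x, hx, rfl⟩
    obtain ⟨i, hi⟩ := Set.mem_iUnion.1 hx
    have hni : ¬ (f ⁻¹' {f x} ⊆ U i) := fun hs => hcon (Or.inr (Set.mem_iUnion.2 ⟨i, hs⟩))
    obtain ⟨x', hx', hxU⟩ := Set.not_subset.1 hni
    exact hzE ⟨Set.mem_iUnion.2 ⟨i, ⟨x, subset_closure hi, rfl⟩, ⟨x', hxU, hx'⟩⟩, hzy⟩
end

section
/- Let f : X → Y be a continuous surjection between compact Hausdorff spaces. Then f is fully closed if and only if for every continuous map g : X → K into a compact metric space K and every ε > 0, the set H_{g,ε} = {y ∈ Y : diam(g(f⁻¹(y))) ≥ ε} is finite, where diam denotes the diameter in the metric of K. -/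
/-!
For the forward direction, cover `K` by finitely many closed balls of radius `ε / 8`. If the image
of a fibre has diameter at least `ε`, it contains two points more than `ε / 2` apart; these lie in
two *disjoint* balls of the cover, so `y` belongs to `f(F₁) ∩ f(F₂)` for the preimages `F₁`, `F₂`
of these balls. There are finitely many such pairs, each contributing finitely many `y`.

For the converse, a Urysohn function `g : X → [0, 1]` separating `F₁` from `F₂` takes both values
`0` and `1` on the fibre over each point of `f(F₁) ∩ f(F₂)`, so this set lies in `H_{g,1}`.
-/

/-- **Proposition 2.** A continuous surjection `f : X → Y` of compact Hausdorff spaces is fully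
closed iff for every continuous map `g : X → K` into a compact metric space `K` and every
`ε > 0` the set `H_{g,ε} = {y ∈ Y : diam(g(f⁻¹(y))) ≥ ε}` is finite. -/
theorem fullyClosed_iff_oscillation_finite
    {X Y : Type} [TopologicalSpace X] [CompactSpace X] [T2Space X]
    [TopologicalSpace Y] [CompactSpace Y] [T2Space Y]
    (f : C(X, Y)) (hsurj : Function.Surjective f) :
    (∀ F₁ F₂ : Set X, IsClosed F₁ → IsClosed F₂ → Disjoint F₁ F₂ →
        (f '' F₁ ∩ f '' F₂).Finite)
      ↔
    (∀ (K : Type) [MetricSpace K] [CompactSpace K], ∀ (g : C(X, K)) (ε : ℝ),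
        0 < ε → {y : Y | ε ≤ Metric.diam (g '' (f ⁻¹' {y}))}.Finite) := by
  constructor
  · intro h K _ _ g ε hε
    obtain ⟨t, ht, hcov⟩ := Metric.totallyBounded_iff.1
      (isCompact_univ (X := K)).totallyBounded (ε / 8) (by positivity)
    let B : K → Set K := fun p => Metric.closedBall p (ε / 8)
    have hfin : (⋃ p ∈ t, ⋃ q ∈ t, ⋃ _ : Disjoint (B p) (B q),
        f '' (g ⁻¹' B p) ∩ f '' (g ⁻¹' B q)).Finite := by
      refine ht.biUnion fun p _ => ht.biUnion fun q _ => Set.finite_iUnion fun hd => ?_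
      exact h _ _ (Metric.isClosed_closedBall.preimage g.continuous)
        (Metric.isClosed_closedBall.preimage g.continuous) (hd.preimage g)
    refine hfin.subset fun y hy => ?_
    have hab : ∃ a b, f a = y ∧ f b = y ∧ ε / 2 < dist (g a) (g b) := by
      by_contra! hcon
      have hle : Metric.diam (g '' (f ⁻¹' {y})) ≤ ε / 2 := by
        refine Metric.diam_le_of_forall_dist_le (by positivity) ?_
        rintro _ ⟨a, ha, rfl⟩ _ ⟨b, hb, rfl⟩
        exact hcon a b ha hb
      have hdiam : ε ≤ Metric.diam (g '' (f ⁻¹' {y})) := hy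
      linarith
    obtain ⟨a, b, ha, hb, hdist⟩ := hab
    have hball : ∀ z : K, ∃ p ∈ t, dist z p < ε / 8 := fun z => by
      simpa using hcov (Set.mem_univ z)
    obtain ⟨p, hp, hap⟩ := hball (g a)
    obtain ⟨q, hq, hbq⟩ := hball (g b)
    have hd : Disjoint (B p) (B q) := by
      refine Metric.closedBall_disjoint_closedBall ?_
      have := dist_triangle4 (g a) p q (g b)
      rw [dist_comm q] at this
      linarith
    simp only [Set.mem_iUnion]
    exact ⟨p, hp, q, hq, hd, ⟨a, hap.le, ha⟩, ⟨b, hbq.le, hb⟩⟩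
  · intro h F₁ F₂ h₁ h₂ hd
    obtain ⟨g, hg0, hg1, hg⟩ := exists_continuous_zero_one_of_isClosed h₁ h₂ hd
    let G : C(X, Set.Icc (0 : ℝ) 1) := ⟨fun x => ⟨g x, hg x⟩, by fun_prop⟩
    refine (h _ G 1 one_pos).subset ?_
    rintro y ⟨⟨a, ha, hay⟩, ⟨b, hb, hby⟩⟩
    have hle := Metric.dist_le_diam_of_mem
      (Metric.isBounded_of_compactSpace (s := G '' (f ⁻¹' {y})))
      (Set.mem_image_of_mem G hay) (Set.mem_image_of_mem G hby)
    have hdist : dist (G a) (G b) = 1 := by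
      simp [G, Subtype.dist_eq, hg0 ha, hg1 hb]
    exact hdist.symm.trans_le hle
end

section
/- Let f : X → Y be a fully closed continuous surjection between compact Hausdorff spaces. Then for every g ∈ C(X), the function Ω_f(g) : Y → ℝ defined by Ω_f(g)(y) = diam(g(f⁻¹(y))) belongs to c₀(Y) for the discrete topology on Y; that is, for every ε > 0 the set {y ∈ Y : diam(g(f⁻¹(y))) ≥ ε} is finite, and consequently the support {y ∈ Y : diam(g(f⁻¹(y))) > 0} is countable. -/
/-!
If the fiber over `y` has oscillation at least `ε`, then `g` takes on it two values more than
`ε / 2` apart, so with `δ = ε / 4` there is an integer `n` for which `n δ` and `(n + 1) δ` both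
lie between them. Hence `y` lies in the images of both disjoint closed sets `{g ≤ n δ}` and
`{(n + 1) δ ≤ g}`. As `g` is bounded, only finitely many `n` occur, and for each of them the full
closedness of `f` leaves finitely many `y`. The support is the union of the sets for
`ε = 1 / (k + 1)`.
-/

/-- For a fully closed continuous surjection `f : X → Y` of compact Hausdorff spaces and any
`g ∈ C(X)`, the fiberwise oscillation `y ↦ diam(g(f⁻¹(y)))` belongs to `c₀(Y)`: for every
`ε > 0` the set `{y : diam(g(f⁻¹(y))) ≥ ε}` is finite, and the support
`{y : diam(g(f⁻¹(y))) > 0}` is countable. -/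
theorem oscillation_mem_c0
    {X Y : Type} [TopologicalSpace X] [CompactSpace X] [T2Space X]
    [TopologicalSpace Y] [CompactSpace Y] [T2Space Y]
    (f : C(X, Y)) (hsurj : Function.Surjective f)
    (hfc : ∀ F₁ F₂ : Set X, IsClosed F₁ → IsClosed F₂ → Disjoint F₁ F₂ →
      (f '' F₁ ∩ f '' F₂).Finite)
    (g : C(X, ℝ)) :
    (∀ ε : ℝ, 0 < ε → {y : Y | ε ≤ Metric.diam (g '' (f ⁻¹' {y}))}.Finite) ∧
    {y : Y | 0 < Metric.diam (g '' (f ⁻¹' {y}))}.Countable := by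
  have hfin : ∀ ε : ℝ, 0 < ε → {y : Y | ε ≤ Metric.diam (g '' (f ⁻¹' {y}))}.Finite := by
    intro ε hε
    obtain ⟨δ, hδ, rfl⟩ : ∃ δ : ℝ, 0 < δ ∧ ε = 4 * δ := ⟨ε / 4, by positivity, by ring⟩
    refine ((Set.finite_Icc (⌊-‖g‖ / δ⌋ + 1) (⌊‖g‖ / δ⌋ + 1)).biUnion
      (t := fun n : ℤ => f '' {x | g x ≤ n * δ} ∩ f '' {x | (n + 1) * δ ≤ g x}) ?_).subset ?_
    · intro n _
      refine hfc _ _ (isClosed_le g.continuous continuous_const)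
        (isClosed_le continuous_const g.continuous) ?_
      rw [Set.disjoint_left]
      intro x (h₁ : g x ≤ n * δ) (h₂ : (n + 1) * δ ≤ g x)
      linarith
    · intro y (hy : 4 * δ ≤ Metric.diam (g '' (f ⁻¹' {y})))
      obtain ⟨a, b, ha, hb, hab⟩ : ∃ a b, f a = y ∧ f b = y ∧ 2 * δ < g b - g a := by
        by_contra! h
        have hle : Metric.diam (g '' (f ⁻¹' {y})) ≤ 2 * δ := by
          refine Metric.diam_le_of_forall_dist_le (by positivity) ?_
          rintro _ ⟨a, ha, rfl⟩ _ ⟨b, hb, rfl⟩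
          rw [Real.dist_eq, abs_le]
          have h₁ := h a b ha hb
          have h₂ := h b a hb ha
          constructor <;> linarith
        linarith
      have hbound := abs_le.mp ((Real.norm_eq_abs (g a)) ▸ g.norm_coe_le_norm a)
      -- `n δ` is the first multiple of `δ` above `g a`, so `(n + 1) δ ≤ g a + 2 δ < g b`.
      have hlt := (div_lt_iff₀ hδ).mp (Int.lt_floor_add_one (g a / δ))
      have hle := (le_div_iff₀ hδ).mp (Int.floor_le (g a / δ))
      refine Set.mem_biUnion (x := ⌊g a / δ⌋ + 1) ⟨?_, ?_⟩ ⟨⟨a, ?_, ha⟩, ⟨b, ?_, hb⟩⟩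
      · have : ⌊-‖g‖ / δ⌋ ≤ ⌊g a / δ⌋ :=
          Int.floor_le_floor (div_le_div_of_nonneg_right hbound.1 hδ.le)
        lia
      · have : ⌊g a / δ⌋ ≤ ⌊‖g‖ / δ⌋ :=
          Int.floor_le_floor (div_le_div_of_nonneg_right hbound.2 hδ.le)
        lia
      · simp only [Set.mem_ofPred_eq]
        push_cast
        exact hlt.le
      · simp only [Set.mem_ofPred_eq]
        push_cast
        linarith
  refine ⟨hfin, ?_⟩
  refine (Set.countable_iUnion fun k : ℕ =>
    (hfin (1 / ((k : ℝ) + 1)) (by positivity)).countable).mono ?_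
  intro y (hy : 0 < Metric.diam (g '' (f ⁻¹' {y})))
  obtain ⟨k, hk⟩ := exists_nat_one_div_lt hy
  exact Set.mem_iUnion.mpr ⟨k, hk.le⟩
end

section
/- Let X be a compact Hausdorff space, Y a metrizable compact space, and f : X → Y a fully closed continuous surjection all of whose fibers f⁻¹(y) are metrizable. Then the fiberwise oscillation map Ω_f : C(X) → c₀(Y) is co-σ-continuous: there exists an assignment g ↦ Z_g of a separable (in the supremum norm) subset Z_g ⊆ C(X) to each g ∈ C(X), such that for every g ∈ C(X) and every sequence (gₙ) in C(X) with sup_{y ∈ Y} |Ω_f(gₙ)(y) − Ω_f(g)(y)| → 0 as n → ∞, the function g belongs to the norm-closure of the linear span of ⋃ₙ Z_{gₙ}. -/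
/-!
Call a function fiberwise constant off `F ⊆ Y` when it is constant on each fiber of `f` over a point
outside `F`. Three facts give the theorem.

* `finite_oscillation`: for `ε > 0` the set `{y | ε ≤ Ω_f(g)(y)}` is finite.
* `isSeparable_constOff`: for finite `F`, the functions fiberwise constant off `F` form a separable
  set. Restriction to the finitely many compact metrizable fibers over `F` lands in a separable
  space, and a function which is fiberwise constant off `F` and at most `ε` on the fibers over `F`
  becomes, after truncating away the values in `[-ε, ε]`, a function pulled back from `Y`.
* `exists_constOff_near`: if `Ω_f(g) < ε` off `F`, some function fiberwise constant off `F` is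
  `ε`-close to `g`. Collapsing the fibers off `F` to points gives a compact space, and full
  closedness makes the collapsing map closed, so this space is Hausdorff; there a partition of
  unity glues constant local approximations of `g`.

Let `Z_g` be the set of functions fiberwise constant off `{y | 1/(m+1) ≤ Ω_f(g)(y)}` for some `m`.
If `Ω_f(gₙ) → Ω_f(g)` uniformly and `1/(m+1) < ε/2`, then `{Ω_f(g) ≥ ε} ⊆ {Ω_f(gₙ) ≥ 1/(m+1)}` for
large `n`, so the `ε`-approximation of `g` belongs to `Z_{gₙ}`.
-/

open TopologicalSpace Set

/-- The continuous functions on `X` that are constant on every fiber of `f` over a point outside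
`F`. -/
def constOff {X Y : Type} [TopologicalSpace X] [TopologicalSpace Y] (f : C(X, Y)) (F : Set Y) :
    Set C(X, ℝ) :=
  {h | ∀ x x', f x = f x' → f x ∉ F → h x = h x'}

lemma dist_le_diam_fiber {X Y : Type} [TopologicalSpace X] [CompactSpace X]
    [TopologicalSpace Y] (f : C(X, Y)) (g : C(X, ℝ)) {x x' : X} (h : f x = f x') :
    |g x - g x'| ≤ Metric.diam (g '' (f ⁻¹' {f x'})) := by
  rw [← Real.dist_eq]
  exact Metric.dist_le_diam_of_mem ((isCompact_range g.continuous).isBounded.subset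
    (image_subset_range _ _)) ⟨x, h, rfl⟩ ⟨x', rfl, rfl⟩

lemma diam_fiber_le {X Y : Type} [TopologicalSpace X] [CompactSpace X]
    [TopologicalSpace Y] (f : C(X, Y)) (g : C(X, ℝ)) (y : Y) :
    Metric.diam (g '' (f ⁻¹' {y})) ≤ 2 * ‖g‖ := by
  refine Metric.diam_le_of_forall_dist_le (by positivity) ?_
  rintro _ ⟨x, -, rfl⟩ _ ⟨x', -, rfl⟩
  exact g.dist_le_two_norm x x'

/-- The oscillation function lies in `c₀(Y)`: a fiber on which `g` oscillates by at least `ε` meets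
both `{g ≤ kε/4}` and `{g ≥ (k+1)ε/4}` for some `k` in a finite range of integers. -/
lemma finite_oscillation {X Y : Type} [TopologicalSpace X] [CompactSpace X]
    [TopologicalSpace Y] (f : C(X, Y))
    (hfc : ∀ F₁ F₂ : Set X, IsClosed F₁ → IsClosed F₂ → Disjoint F₁ F₂ →
      (f '' F₁ ∩ f '' F₂).Finite) (g : C(X, ℝ)) {ε : ℝ} (hε : 0 < ε) :
    {y | ε ≤ Metric.diam (g '' (f ⁻¹' {y}))}.Finite := by
  set δ := ε / 4 with hδ
  have hδ0 : 0 < δ := by positivity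
  have key : ∀ k : ℤ, (f '' {x | g x ≤ k * δ} ∩ f '' {x | (k + 1) * δ ≤ g x}).Finite := by
    intro k
    refine hfc _ _ (isClosed_le g.continuous continuous_const)
      (isClosed_le continuous_const g.continuous) (Set.disjoint_left.2 fun x hx hx' => ?_)
    simp only [mem_ofPred_eq] at hx hx'
    linarith
  refine ((Set.finite_Icc ⌈-‖g‖ / δ⌉ ⌈‖g‖ / δ⌉).biUnion fun k _ => key k).subset ?_
  intro y hy
  have h1 : ∃ a b, f a = y ∧ f b = y ∧ g a + ε / 2 < g b := by
    by_contra! hcon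
    have : Metric.diam (g '' (f ⁻¹' {y})) ≤ ε / 2 := by
      refine Metric.diam_le_of_forall_dist_le (by positivity) ?_
      rintro _ ⟨a, ha, rfl⟩ _ ⟨b, hb, rfl⟩
      rw [Real.dist_eq, abs_le]
      constructor <;> linarith [hcon a b ha hb, hcon b a hb ha]
    simp only [mem_ofPred_eq] at hy
    linarith
  obtain ⟨a, b, ha, hb, hab⟩ := h1
  have hga := abs_le.1 (g.norm_coe_le_norm a)
  have hk1 : g a ≤ ⌈g a / δ⌉ * δ := (div_le_iff₀ hδ0).1 (Int.le_ceil _)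
  have hk2 : (⌈g a / δ⌉ - 1 : ℝ) * δ < g a :=
    (lt_div_iff₀ hδ0).1 (by linarith [Int.ceil_lt_add_one (g a / δ)])
  refine mem_biUnion (x := ⌈g a / δ⌉) ⟨?_, ?_⟩ ⟨⟨a, hk1, ha⟩, ⟨b, ?_, hb⟩⟩
  · exact Int.ceil_mono (by gcongr; exact hga.1)
  · exact Int.ceil_mono (by gcongr; exact hga.2)
  · simp only [mem_ofPred_eq]
    linarith

lemma isSeparable_constOff {X Y : Type} [TopologicalSpace X] [CompactSpace X] [T2Space X]
    [TopologicalSpace Y] [CompactSpace Y] [T2Space Y] [MetrizableSpace Y]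
    (f : C(X, Y)) (hsurj : Function.Surjective f)
    (hfib : ∀ y : Y, MetrizableSpace (f ⁻¹' {y} : Set X)) {F : Set Y} (hF : F.Finite) :
    IsSeparable (constOff f F) := by
  have hcomp : ∀ y : Y, CompactSpace (f ⁻¹' {y} : Set X) := fun y =>
    isCompact_iff_compactSpace.1 (isClosed_singleton.preimage f.continuous).isCompact
  have hsc : ∀ y : Y, SecondCountableTopology (f ⁻¹' {y} : Set X) := fun y => by
    let _ := metrizableSpaceMetric (f ⁻¹' {y} : Set X)
    infer_instance
  have hscY : SecondCountableTopology Y := by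
    let _ := metrizableSpaceMetric Y
    infer_instance
  have hquot : Topology.IsQuotientMap f := f.continuous.isClosedMap.isQuotientMap f.continuous hsurj
  have : Fintype F := hF.fintype
  let R : C(X, ℝ) → ∀ y : F, C((f ⁻¹' {y.1} : Set X), ℝ) := fun h y => h.restrict _
  obtain ⟨T, hTsub, hTc, hT⟩ :=
    (IsSeparable.of_separableSpace (R '' constOff f F)).exists_countable_dense_subset
  obtain ⟨D, hDsub, hDc, rfl⟩ : ∃ D ⊆ constOff f F, D.Countable ∧ R '' D = T := by
    choose! s hs hs' using hTsub
    refine ⟨s '' T, ?_, hTc.image s, ?_⟩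
    · rintro _ ⟨t, ht, rfl⟩
      exact hs ht
    · rw [image_image]
      exact (image_congr hs').trans (image_id' T)
  have hpull : IsSeparable (range fun l : C(Y, ℝ) => l.comp f) :=
    isSeparable_range (ContinuousMap.continuous_precomp f)
  refine (((hDc.isSeparable.prod hpull).image continuous_add).closure).mono ?_
  intro h hh
  rw [Metric.mem_closure_iff]
  intro ε hε
  obtain ⟨_, ⟨d, hd, rfl⟩, hdist⟩ :=
    Metric.mem_closure_iff.1 (hT ⟨h, hh, rfl⟩) (ε / 2) (by positivity)
  have hsmall : ∀ x, f x ∈ F → |h x - d x| ≤ ε / 2 := by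
    intro x hx
    have h1 := (dist_le_pi_dist (R h) (R d) ⟨f x, hx⟩).trans hdist.le
    have h2 := (ContinuousMap.dist_apply_le_dist (f := R h ⟨f x, hx⟩) (g := R d ⟨f x, hx⟩)
      ⟨x, rfl⟩).trans h1
    simpa [R, Real.dist_eq] using h2
  -- Soft thresholding at level `ε / 2`.
  let k : C(X, ℝ) := ⟨fun x => (h x - d x) - max (-(ε / 2)) (min (ε / 2) (h x - d x)), by fun_prop⟩
  have hk0 : ∀ x, f x ∈ F → k x = 0 := by
    intro x hx
    have := abs_le.1 (hsmall x hx)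
    simp only [k, ContinuousMap.coe_mk]
    rw [min_eq_right this.2, max_eq_right this.1, sub_self]
  have hkf : Function.FactorsThrough k f := by
    intro x x' hxx
    by_cases hx : f x ∈ F
    · rw [hk0 x hx, hk0 x' (hxx ▸ hx)]
    · simp only [k, ContinuousMap.coe_mk]
      rw [hh x x' hxx hx, hDsub hd x x' hxx hx]
  let l : C(Y, ℝ) := hquot.lift k hkf
  have hl : l.comp f = k := hquot.lift_comp k hkf
  refine ⟨d + k, ⟨(d, k), ⟨hd, l, hl⟩, rfl⟩, ?_⟩
  refine lt_of_le_of_lt ((ContinuousMap.dist_le (C := ε / 2) (by positivity)).2 fun x => ?_)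
    (by linarith)
  have : h x - (d + k) x = max (-(ε / 2)) (min (ε / 2) (h x - d x)) := by
    simp only [k, ContinuousMap.add_apply, ContinuousMap.coe_mk]
    ring
  rw [Real.dist_eq, this, abs_le]
  exact ⟨le_max_left _ _, max_le (by linarith) (min_le_left _ _)⟩

/-- The equivalence relation on `X` collapsing to a point each fiber of `f` over a point outside
`F`. -/
def collapse {X Y : Type} (f : X → Y) (F : Set Y) : Setoid X where
  r x x' := x = x' ∨ (f x = f x' ∧ f x ∉ F)
  iseqv :=
    { refl := fun _ => Or.inl rfl
      symm := by
        rintro x x' (rfl | ⟨h, h'⟩)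
        · exact Or.inl rfl
        · exact Or.inr ⟨h.symm, h ▸ h'⟩
      trans := by
        rintro x x' x'' (rfl | ⟨h, h'⟩) (rfl | ⟨k, k'⟩)
        · exact Or.inl rfl
        · exact Or.inr ⟨k, k'⟩
        · exact Or.inr ⟨h, h'⟩
        · exact Or.inr ⟨h.trans k, h'⟩ }

/-- Full closedness makes the collapsing map closed: if `x ∉ C` lies over a point of `F`, take a
closed neighbourhood `N` of `x` disjoint from `C`; as `f(N) ∩ f(C)` is finite, removing from `N` the
other fibers over this set gives a neighbourhood of `x` disjoint from the saturation of `C`. -/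
lemma isClosedMap_collapse {X Y : Type} [TopologicalSpace X] [CompactSpace X] [T2Space X]
    [TopologicalSpace Y] [T2Space Y] (f : C(X, Y))
    (hfc : ∀ F₁ F₂ : Set X, IsClosed F₁ → IsClosed F₂ → Disjoint F₁ F₂ →
      (f '' F₁ ∩ f '' F₂).Finite) (F : Set Y) :
    IsClosedMap (Quotient.mk (collapse f F)) := by
  intro C hC
  have hquot : Topology.IsQuotientMap (Quotient.mk (collapse f F)) := isQuotientMap_quot_mk
  rw [← hquot.isClosed_preimage]
  have hsat : Quotient.mk (collapse f F) ⁻¹' (Quotient.mk (collapse f F) '' C) =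
      C ∪ {x | f x ∈ f '' C ∧ f x ∉ F} := by
    ext x
    constructor
    · rintro ⟨c, hc, hcx⟩
      rcases Quotient.exact hcx with rfl | ⟨h, h'⟩
      · exact Or.inl hc
      · exact Or.inr ⟨⟨c, hc, h⟩, h ▸ h'⟩
    · rintro (hx | ⟨⟨c, hc, h⟩, h'⟩)
      · exact ⟨x, hx, rfl⟩
      · exact ⟨c, hc, Quotient.sound (Or.inr ⟨h, h ▸ h'⟩)⟩
  rw [hsat, ← isOpen_compl_iff, isOpen_iff_mem_nhds]
  intro x hx
  simp only [mem_compl_iff, mem_union, mem_ofPred_eq, not_or, not_and, not_not] at hx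
  obtain ⟨hxC, hxF⟩ := hx
  obtain ⟨N, hN, hNcl, hNC⟩ := exists_mem_nhds_isClosed_subset (hC.isOpen_compl.mem_nhds hxC)
  have hfin := (hfc N C hNcl hC (Set.disjoint_left.2 hNC)).subset
    (sdiff_subset (t := {f x}))
  have hopen : IsOpen (f ⁻¹' ((f '' N ∩ f '' C) \ {f x})ᶜ) :=
    hfin.isClosed.isOpen_compl.preimage f.continuous
  filter_upwards [hN, hopen.mem_nhds (fun h => h.2 rfl)] with z hzN hz
  rintro (hzC | ⟨hzC, hzF⟩)
  · exact hNC hzN hzC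
  · have hzx : f z = f x := by
      by_contra hne
      exact hz ⟨⟨⟨z, hzN, rfl⟩, hzC⟩, hne⟩
    exact hzF (hzx ▸ hxF (hzx ▸ hzC))

lemma t2Space_of_isClosedMap {X Q : Type} [TopologicalSpace X] [CompactSpace X] [T2Space X]
    [TopologicalSpace Q] {q : X → Q} (hq : IsClosedMap q) (hc : Continuous q)
    (hs : Function.Surjective q) : T2Space Q := by
  have hcl : ∀ a : Q, IsClosed (q ⁻¹' {a}) := by
    intro a
    obtain ⟨x, rfl⟩ := hs a
    have := hq _ (isClosed_singleton (x := x))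
    rw [image_singleton] at this
    exact this.preimage hc
  refine ⟨fun a b hab => ?_⟩
  obtain ⟨U, V, hU, hV, haU, hbV, hUV⟩ := normal_separation (hcl a) (hcl b)
    (Disjoint.preimage q (by simpa using hab))
  refine ⟨kernImage q U, kernImage q V, isClosedMap_iff_kernImage.1 hq hU,
    isClosedMap_iff_kernImage.1 hq hV, fun x hx => haU hx, fun x hx => hbV hx, ?_⟩
  refine Set.disjoint_left.2 fun c hcU hcV => ?_
  obtain ⟨x, rfl⟩ := hs c
  exact Set.disjoint_left.1 hUV (hcU rfl) (hcV rfl)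

lemma exists_constOff_near {X Y : Type} [TopologicalSpace X] [CompactSpace X] [T2Space X]
    [TopologicalSpace Y] [T2Space Y] (f : C(X, Y))
    (hfc : ∀ F₁ F₂ : Set X, IsClosed F₁ → IsClosed F₂ → Disjoint F₁ F₂ →
      (f '' F₁ ∩ f '' F₂).Finite) (F : Set Y) (g : C(X, ℝ)) {ε : ℝ} (hε : 0 < ε)
    (hg : ∀ y ∉ F, Metric.diam (g '' (f ⁻¹' {y})) < ε) :
    ∃ h ∈ constOff f F, ∀ x, |g x - h x| < ε := by
  let q : X → Quotient (collapse f F) := Quotient.mk _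
  have hqc : Continuous q := continuous_quotient_mk'
  have hq : IsClosedMap q := isClosedMap_collapse f hfc F
  have : T2Space (Quotient (collapse f F)) :=
    t2Space_of_isClosedMap hq hqc Quotient.mk_surjective
  obtain ⟨k, hk⟩ := exists_continuous_forall_mem_convex_of_local_const
    (t := fun a : Quotient (collapse f F) => ⋂ x ∈ q ⁻¹' {a}, Metric.ball (g x) ε)
    (fun a => convex_iInter₂ fun x _ => convex_ball _ _) (fun a => by
      obtain ⟨x₀, rfl⟩ := Quotient.mk_surjective a
      refine ⟨g x₀, ?_⟩
      have hev : ∀ x ∈ q ⁻¹' {Quotient.mk _ x₀}, ∀ᶠ z in nhds x, g x₀ ∈ Metric.ball (g z) ε := by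
        intro x hx
        refine (isOpen_lt (continuous_const.dist g.continuous) continuous_const).mem_nhds ?_
        rcases Quotient.exact hx with rfl | ⟨h, h'⟩
        · simpa using hε
        · rw [mem_ofPred_eq, dist_comm, Real.dist_eq]
          exact (dist_le_diam_fiber f g h).trans_lt (hg _ (h ▸ h'))
      filter_upwards [hq.eventually_nhds_fiber _ hev] with b hb
      simpa only [mem_iInter₂] using hb)
  refine ⟨k.comp ⟨q, hqc⟩, ?_, fun x => ?_⟩
  · intro x x' hxx hx
    exact congrArg k (Quotient.sound (Or.inr ⟨hxx, hx⟩))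
  · have h1 := mem_iInter₂.1 (hk (q x)) x rfl
    rw [Metric.mem_ball, dist_comm, Real.dist_eq] at h1
    exact h1

/-- **Proposition 3.** For a fully closed continuous surjection `f : X → Y` of a compact
Hausdorff space `X` onto a metrizable compact space `Y` with metrizable fibers, the fiberwise
oscillation map `Ω_f : C(X) → c₀(Y)`, `Ω_f(g)(y) = diam(g(f⁻¹(y)))`, is co-σ-continuous:
there is an assignment `g ↦ Z_g` of separable subsets of `C(X)` such that whenever
`‖Ω_f(gₙ) − Ω_f(g)‖∞ → 0`, the function `g` lies in the norm-closure of the linear span of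
`⋃ₙ Z_{gₙ}`. -/
theorem oscillation_co_sigma_continuous
    {X Y : Type} [TopologicalSpace X] [CompactSpace X] [T2Space X]
    [TopologicalSpace Y] [CompactSpace Y] [T2Space Y]
    [TopologicalSpace.MetrizableSpace Y]
    (f : C(X, Y)) (hsurj : Function.Surjective f)
    (hfc : ∀ F₁ F₂ : Set X, IsClosed F₁ → IsClosed F₂ → Disjoint F₁ F₂ →
      (f '' F₁ ∩ f '' F₂).Finite)
    (hfib : ∀ y : Y, TopologicalSpace.MetrizableSpace (f ⁻¹' {y} : Set X)) :
    ∃ Z : C(X, ℝ) → Set C(X, ℝ),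
      (∀ g : C(X, ℝ), TopologicalSpace.IsSeparable (Z g)) ∧
      (∀ (g : C(X, ℝ)) (gs : ℕ → C(X, ℝ)),
        Filter.Tendsto
          (fun n => ⨆ y : Y,
            |Metric.diam (gs n '' (f ⁻¹' {y})) - Metric.diam (g '' (f ⁻¹' {y}))|)
          Filter.atTop (nhds 0) →
        g ∈ closure (Submodule.span ℝ (⋃ n : ℕ, Z (gs n)) : Set C(X, ℝ))) := by
  refine ⟨fun g => ⋃ m : ℕ, constOff f {y | 1 / ((m : ℝ) + 1) ≤ Metric.diam (g '' (f ⁻¹' {y}))},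
    fun g => IsSeparable.iUnion fun m => isSeparable_constOff f hsurj hfib
      (finite_oscillation f hfc g (by positivity)), fun g gs hlim => ?_⟩
  rw [Metric.mem_closure_iff]
  intro ε hε
  obtain ⟨m, hm⟩ := exists_nat_one_div_lt (half_pos (half_pos hε))
  obtain ⟨n, hn⟩ := (hlim.eventually_lt_const (half_pos (half_pos hε))).exists
  have hdiff : ∀ y, |Metric.diam (gs n '' (f ⁻¹' {y})) - Metric.diam (g '' (f ⁻¹' {y}))|
      < ε / 2 / 2 := by
    intro y
    refine lt_of_le_of_lt (le_ciSup (f := fun y => |Metric.diam (gs n '' (f ⁻¹' {y})) -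
      Metric.diam (g '' (f ⁻¹' {y}))|) ⟨2 * ‖gs n‖ + 2 * ‖g‖, ?_⟩ y) hn
    rintro _ ⟨z, rfl⟩
    rw [abs_le]
    constructor <;> linarith [diam_fiber_le f (gs n) z, diam_fiber_le f g z,
      Metric.diam_nonneg (s := gs n '' (f ⁻¹' {z})), Metric.diam_nonneg (s := g '' (f ⁻¹' {z}))]
  obtain ⟨h, hh, hgh⟩ := exists_constOff_near f hfc
    {y | 1 / ((m : ℝ) + 1) ≤ Metric.diam (gs n '' (f ⁻¹' {y}))} g (half_pos hε) (fun y hy => by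
      simp only [mem_ofPred_eq, not_le] at hy
      linarith [(abs_lt.1 (hdiff y)).1])
  refine ⟨h, Submodule.subset_span (mem_iUnion.2 ⟨n, mem_iUnion.2 ⟨m, hh⟩⟩), ?_⟩
  refine lt_of_le_of_lt ((ContinuousMap.dist_le (half_pos hε).le).2 fun x => ?_) (half_lt_self hε)
  rw [Real.dist_eq]
  exact (hgh x).le
end

section
/- Let X be a compact Hausdorff space, Y a metrizable compact space, and f : X → Y a fully closed continuous surjection all of whose fibers f⁻¹(y) are metrizable. Then for every g ∈ C(X) and every ε > 0 there exists p ∈ C(X) such that ‖p − g‖∞ ≤ ε and the support of the fiberwise oscillation of p is contained in the finite set K = {y ∈ Y : diam(g(f⁻¹(y))) ≥ ε/2}; that is, diam(p(f⁻¹(y))) = 0 (equivalently, p is constant on f⁻¹(y)) for every y ∉ K. -/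
/-!
Let `K` be the set of points of `Y` over which `g` oscillates by at least `ε / 2`, and let `Z` be
the quotient of `X` that collapses every fiber of `f` over a point outside `K` to a single point.
Full closedness of `f` makes the projection `X → Z` a closed map (`isClosedMap_mk`), so `Z` is
compact and normal. For each `z : Z`, let `t z` be the set of reals at distance less than `ε` from
every value of `g` on the class `z`. It is convex. If `x` represents `z`, then `g` stays within `ε`
of `g x` on the class `z`, hence, the projection being closed, on all nearby classes; so `g x`
belongs to `t z'` for all `z'` near `z`. A partition of unity on `Z` therefore gives a continuous
selection of `t`, and its pullback to `X` is the required `p`.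
-/

/-- The relation on `X` that collapses each fiber of `f` over a point outside `K` to a point. -/
def collapseSetoid {X Y : Type} (f : X → Y) (K : Set Y) : Setoid X where
  r a b := a = b ∨ (f a = f b ∧ f a ∉ K)
  iseqv := by
    refine ⟨fun _ => Or.inl rfl, ?_, ?_⟩
    · rintro a b (h | ⟨h, h'⟩)
      · exact Or.inl h.symm
      · exact Or.inr ⟨h.symm, h ▸ h'⟩
    · rintro a b c (rfl | ⟨h, h'⟩) (rfl | ⟨k, k'⟩)
      · exact Or.inl rfl
      · exact Or.inr ⟨k, k'⟩
      · exact Or.inr ⟨h, h'⟩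
      · exact Or.inr ⟨h.trans k, h'⟩

/-- For a fully closed map, collapsing any family of fibers is a closed map. -/
lemma isClosedMap_mk {X Y : Type} [TopologicalSpace X] [CompactSpace X] [T2Space X]
    [TopologicalSpace Y] [T2Space Y] (f : C(X, Y))
    (hfc : ∀ F₁ F₂ : Set X, IsClosed F₁ → IsClosed F₂ → Disjoint F₁ F₂ →
      (f '' F₁ ∩ f '' F₂).Finite) (K : Set Y) :
    IsClosedMap (Quotient.mk (collapseSetoid f K)) := by
  intro F hF
  rw [← isQuotientMap_quotient_mk'.isClosed_preimage]
  have hsat : Quotient.mk (collapseSetoid f K) ⁻¹' (Quotient.mk (collapseSetoid f K) '' F)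
      = F ∪ f ⁻¹' (f '' F \ K) := by
    ext x
    constructor
    · rintro ⟨a, ha, hax⟩
      rcases Quotient.exact hax with h | ⟨h, h'⟩
      · exact Or.inl (h ▸ ha)
      · exact Or.inr ⟨⟨a, ha, h⟩, fun hK => h' (h ▸ hK)⟩
    · rintro (h | ⟨⟨a, ha, h⟩, h'⟩)
      · exact ⟨x, h, rfl⟩
      · exact ⟨a, ha, Quotient.sound (Or.inr ⟨h, fun hK => h' (h ▸ hK)⟩)⟩
  refine hsat ▸ isClosed_of_closure_subset fun x hx => ?_
  by_cases hxF : x ∈ F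
  · exact Or.inl hxF
  -- Near `x ∉ F` the saturation of `F` lies over the finite set `f N ∩ f F`, taken outside `K`.
  obtain ⟨N, hN, hNc, hNF⟩ := exists_mem_nhds_isClosed_subset (hF.isOpen_compl.mem_nhds hxF)
  have hfin : ((f '' N ∩ f '' F) \ K).Finite :=
    (hfc N F hNc hF (Set.disjoint_left.2 fun a ha => hNF ha)).subset Set.sdiff_subset
  have hcl : IsClosed (f ⁻¹' ((f '' N ∩ f '' F) \ K)) := hfin.isClosed.preimage f.continuous
  have hxN : x ∈ f ⁻¹' ((f '' N ∩ f '' F) \ K) := by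
    refine hcl.closure_subset (mem_closure_iff_nhds.2 fun U hU => ?_)
    obtain ⟨w, ⟨hwU, hwN⟩, hw⟩ := mem_closure_iff_nhds.1 hx (U ∩ N) (Filter.inter_mem hU hN)
    rcases hw with hw | hw
    · exact absurd hw (hNF hwN)
    · exact ⟨w, hwU, ⟨⟨w, hwN, rfl⟩, hw.1⟩, hw.2⟩
  exact Or.inr ⟨hxN.1.2, hxN.2⟩

lemma normalSpace_of_isClosedMap {X Z : Type} [TopologicalSpace X] [NormalSpace X]
    [TopologicalSpace Z] {q : X → Z} (hq : Continuous q) (hs : Function.Surjective q)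
    (hc : IsClosedMap q) : NormalSpace Z := by
  refine ⟨fun s t hs' ht' hst => ?_⟩
  obtain ⟨U, V, hU, hV, hsU, htV, hUV⟩ :=
    normal_separation (hs'.preimage hq) (ht'.preimage hq) (hst.preimage q)
  refine ⟨Set.kernImage q U, Set.kernImage q V, isClosedMap_iff_kernImage.1 hc hU,
    isClosedMap_iff_kernImage.1 hc hV, Set.subset_kernImage_iff.2 hsU,
    Set.subset_kernImage_iff.2 htV, Set.disjoint_left.2 fun z hz hz' => ?_⟩
  obtain ⟨x, rfl⟩ := hs z
  exact Set.disjoint_left.1 hUV (hz rfl) (hz' rfl)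

/-- For a fully closed continuous surjection `f : X → Y` of a compact Hausdorff space onto a
metrizable compact space with metrizable fibers: every `g ∈ C(X)` can be `ε`-approximated in
the sup norm by some `p ∈ C(X)` whose fiberwise oscillation is supported in the finite set
`K = {y : diam(g(f⁻¹(y))) ≥ ε/2}`, i.e. `p` is constant on every fiber `f⁻¹(y)` with `y ∉ K`. -/
theorem approx_by_small_oscillation_support
    {X Y : Type} [TopologicalSpace X] [CompactSpace X] [T2Space X]
    [TopologicalSpace Y] [CompactSpace Y] [T2Space Y]
    [TopologicalSpace.MetrizableSpace Y]
    (f : C(X, Y)) (hsurj : Function.Surjective f)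
    (hfc : ∀ F₁ F₂ : Set X, IsClosed F₁ → IsClosed F₂ → Disjoint F₁ F₂ →
      (f '' F₁ ∩ f '' F₂).Finite)
    (hfib : ∀ y : Y, TopologicalSpace.MetrizableSpace (f ⁻¹' {y} : Set X))
    (g : C(X, ℝ)) (ε : ℝ) (hε : 0 < ε) :
    ∃ p : C(X, ℝ), ‖p - g‖ ≤ ε ∧
      ∀ y : Y, y ∉ {y : Y | ε / 2 ≤ Metric.diam (g '' (f ⁻¹' {y}))} →
        Metric.diam (p '' (f ⁻¹' {y})) = 0 := by
  set K : Set Y := {y : Y | ε / 2 ≤ Metric.diam (g '' (f ⁻¹' {y}))} with hK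
  let q : X → Quotient (collapseSetoid f K) := Quotient.mk (collapseSetoid f K)
  have hqc : Continuous q := continuous_quotient_mk'
  have hqs : Function.Surjective q := Quotient.mk_surjective
  have hcl : IsClosedMap q := isClosedMap_mk f hfc K
  have : NormalSpace (Quotient (collapseSetoid f K)) := normalSpace_of_isClosedMap hqc hqs hcl
  have hosc : ∀ a b : X, q a = q b → |g a - g b| < ε := by
    intro a b hab
    rcases Quotient.exact hab with rfl | ⟨h, h'⟩
    · simpa using hε
    · have hlt : Metric.diam (g '' (f ⁻¹' {f a})) < ε / 2 := not_le.1 h'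
      have hbdd : Bornology.IsBounded (g '' (f ⁻¹' {f a})) :=
        (isCompact_range g.continuous).isBounded.subset (Set.image_subset_range _ _)
      have := Metric.dist_le_diam_of_mem hbdd (Set.mem_image_of_mem g (rfl : f a = f a))
        (Set.mem_image_of_mem g (h.symm : f b = f a))
      rw [Real.dist_eq] at this
      linarith
  obtain ⟨h, hh⟩ := exists_continuous_forall_mem_convex_of_local_const
    (t := fun z : Quotient (collapseSetoid f K) => ⋂ x ∈ q ⁻¹' {z}, Metric.ball (g x) ε)
    (fun z => convex_iInter₂ fun x _ => convex_ball _ _) (by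
      intro z
      obtain ⟨a, rfl⟩ := hqs z
      refine ⟨g a, ?_⟩
      have hev := hcl.eventually_nhds_fiber (p := fun x => |g a - g x| < ε) (q a) (by
        intro x hx
        exact ((continuous_const.sub g.continuous).abs.isOpen_preimage _ isOpen_Iio).mem_nhds
          (hosc a x hx.symm))
      filter_upwards [hev] with z hz
      simp only [Set.mem_iInter]
      exact fun x hx => by simpa [Metric.mem_ball, Real.dist_eq] using hz x hx)
  refine ⟨h.comp ⟨q, hqc⟩, ?_, ?_⟩
  · refine (ContinuousMap.norm_le _ hε.le).2 fun x => ?_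
    have := Set.mem_iInter₂.1 (hh (q x)) x rfl
    exact (mem_ball_iff_norm.1 this).le
  · intro y hy
    refine Metric.diam_subsingleton ?_
    rintro _ ⟨a, ha, rfl⟩ _ ⟨b, hb, rfl⟩
    have ha' : f a = y := ha
    have hb' : f b = y := hb
    have hab : q a = q b := Quotient.sound (Or.inr ⟨ha'.trans hb'.symm, ha' ▸ hy⟩)
    exact congrArg h hab
end

section
/- Let X be a compact Hausdorff space, Y a metrizable compact space, and f : X → Y a fully closed continuous surjection all of whose fibers f⁻¹(y) are metrizable. Then for every countable subset S ⊆ Y, the set Z = {h ∈ C(X) : h is constant on the fiber f⁻¹(y) for every y ∉ S} is separable in the supremum norm on C(X). -/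
/-!
Let `Z` be the set of functions in question. The space `X` carries a countable family `𝒩` of sets
(not necessarily open) that is a network for the weak topology induced by `Z`: whenever `h ∈ Z`,
`W` is open and `h x ∈ W`, some member of `𝒩` contains `x` and lies in `h ⁻¹' W`. The family
consists of countable bases of the fibers over `S`, together with the sets `f ⁻¹' (V \ S)` for `V`
in a countable basis of `Y`; the latter work at points not over `S` because `f` is a closed map
(`exists_countable_network`).

For `M, N ∈ 𝒩` and rational `q`, choose one function in `Z` that is `< q` on `M` and `> q` on `N`,
if there is one. These countably many functions separate every pair of points separated by `Z`,
so every element of `Z` factors through the compact metrizable image `K` of `X` in the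
corresponding countable power of `ℝ`. Thus `Z` lies in the image of the separable space `C(K, ℝ)`
(`isSeparable_of_network`).
-/

open TopologicalSpace

/-- The witness consists of countable bases of the fibers over `S` and the sets `f ⁻¹' (V \ S)` for `V` in a
countable basis of `Y`. -/
lemma exists_countable_network
    {X Y : Type} [TopologicalSpace X] [CompactSpace X]
    [TopologicalSpace Y] [CompactSpace Y] [T2Space Y] [MetrizableSpace Y]
    (f : C(X, Y)) (hfib : ∀ y : Y, MetrizableSpace (f ⁻¹' {y} : Set X))
    (S : Set Y) (hS : S.Countable) :
    ∃ 𝒩 : Set (Set X), 𝒩.Countable ∧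
      ∀ h : C(X, ℝ), (∀ y : Y, y ∉ S → ∀ x₁ ∈ f ⁻¹' {y}, ∀ x₂ ∈ f ⁻¹' {y}, h x₁ = h x₂) →
        ∀ x : X, ∀ W : Set ℝ, IsOpen W → h x ∈ W → ∃ M ∈ 𝒩, x ∈ M ∧ ∀ z ∈ M, h z ∈ W := by
  have hsc : SecondCountableTopology Y := by
    let := metrizableSpaceMetric Y
    infer_instance
  have hfsc : ∀ y : Y, SecondCountableTopology (f ⁻¹' {y} : Set X) := by
    intro y
    have := hfib y
    have : CompactSpace (f ⁻¹' {y} : Set X) :=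
      isCompact_iff_compactSpace.mp ((isClosed_singleton.preimage f.continuous).isCompact)
    let := metrizableSpaceMetric (f ⁻¹' {y} : Set X)
    infer_instance
  refine ⟨((fun V : Set Y => f ⁻¹' (V \ S)) '' countableBasis Y) ∪
    ⋃ s ∈ S, (fun B : Set (f ⁻¹' {s} : Set X) => Subtype.val '' B) ''
      countableBasis (f ⁻¹' {s} : Set X), ?_, ?_⟩
  · exact ((countable_countableBasis Y).image _).union
      (hS.biUnion fun s _ => (countable_countableBasis _).image _)
  intro h hh x W hW hx
  by_cases hxS : f x ∈ S
  · obtain ⟨B, hB, hxB, hBW⟩ := (isBasis_countableBasis (f ⁻¹' {f x} : Set X)).exists_subset_of_mem_open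
      (a := ⟨x, rfl⟩) (u := (fun z => h z.1) ⁻¹' W) hx
      (hW.preimage (h.continuous.comp continuous_subtype_val))
    refine ⟨Subtype.val '' B, Or.inr ?_, ⟨_, hxB, rfl⟩, ?_⟩
    · exact Set.mem_biUnion hxS ⟨B, hB, rfl⟩
    · rintro _ ⟨z, hz, rfl⟩
      exact hBW hz
  · -- The points of `Y` whose whole fiber lies in `h ⁻¹' W` form an open set, as `f` is closed.
    have hopen : IsOpen (f '' (h ⁻¹' W)ᶜ)ᶜ :=
      (f.continuous.isClosedMap _ (hW.preimage h.continuous).isClosed_compl).isOpen_compl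
    have hmem : f x ∈ (f '' (h ⁻¹' W)ᶜ)ᶜ := by
      rintro ⟨z, hz, hzx⟩
      apply hz
      show h z ∈ W
      rw [hh (f x) hxS z hzx x rfl]
      exact hx
    obtain ⟨B, hB, hxB, hBW⟩ := (isBasis_countableBasis Y).exists_subset_of_mem_open hmem hopen
    refine ⟨f ⁻¹' (B \ S), Or.inl ⟨B, hB, rfl⟩, ⟨hxB, hxS⟩, ?_⟩
    intro z hz
    by_contra hzW
    exact hBW hz.1 ⟨z, hzW, rfl⟩

/-- A set of continuous functions on a compact space is separable if its weak topology has a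
countable network. -/
lemma isSeparable_of_network {X : Type} [TopologicalSpace X] [CompactSpace X]
    (Z : Set C(X, ℝ)) (𝒩 : Set (Set X)) (h𝒩 : 𝒩.Countable)
    (hnet : ∀ h ∈ Z, ∀ x : X, ∀ W : Set ℝ, IsOpen W → h x ∈ W →
      ∃ M ∈ 𝒩, x ∈ M ∧ ∀ z ∈ M, h z ∈ W) :
    IsSeparable Z := by
  have : Countable 𝒩 := h𝒩.to_subtype
  have hchoice : ∀ t : 𝒩 × 𝒩 × ℚ, ∃ g : C(X, ℝ),
      (∃ h ∈ Z, (∀ z ∈ t.1.1, h z < t.2.2) ∧ ∀ z ∈ t.2.1.1, (t.2.2 : ℝ) < h z) →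
        (∀ z ∈ t.1.1, g z < t.2.2) ∧ ∀ z ∈ t.2.1.1, (t.2.2 : ℝ) < g z := by
    intro t
    by_cases ht : ∃ h ∈ Z, (∀ z ∈ t.1.1, h z < t.2.2) ∧ ∀ z ∈ t.2.1.1, (t.2.2 : ℝ) < h z
    · obtain ⟨h, -, hh⟩ := ht
      exact ⟨h, fun _ => hh⟩
    · exact ⟨0, fun h => absurd h ht⟩
  choose g hg using hchoice
  have hlt : ∀ h ∈ Z, ∀ x y : X, h x < h y → ∃ t, g t x ≠ g t y := by
    intro h hh x y hxy
    obtain ⟨q, hq₁, hq₂⟩ := exists_rat_btwn hxy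
    obtain ⟨M, hM, hxM, hMq⟩ := hnet h hh x (Set.Iio q) isOpen_Iio hq₁
    obtain ⟨N, hN, hyN, hNq⟩ := hnet h hh y (Set.Ioi q) isOpen_Ioi hq₂
    have := hg (⟨M, hM⟩, ⟨N, hN⟩, q) ⟨h, hh, hMq, hNq⟩
    exact ⟨_, ((this.1 x hxM).trans (this.2 y hyN)).ne⟩
  let e : X → (𝒩 × 𝒩 × ℚ → ℝ) := fun x t => g t x
  have he : Continuous e := continuous_pi fun t => (g t).continuous
  have hsep : ∀ h ∈ Z, ∀ x y : X, e x = e y → h x = h y := by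
    intro h hh x y hxy
    rcases lt_trichotomy (h x) (h y) with hl | hl | hl
    · obtain ⟨t, ht⟩ := hlt h hh x y hl
      exact absurd (congrFun hxy t) ht
    · exact hl
    · obtain ⟨t, ht⟩ := hlt h hh y x hl
      exact absurd (congrFun hxy t).symm ht
  let p : C(X, Set.range e) := ⟨Set.rangeFactorization e, he.subtype_mk _⟩
  have hp : Topology.IsQuotientMap p :=
    p.continuous.isClosedMap.isQuotientMap p.continuous Set.rangeFactorization_surjective
  have : CompactSpace (Set.range e) := isCompact_iff_compactSpace.mp (isCompact_range he)
  have hcomp : Continuous fun k : C(Set.range e, ℝ) => k.comp p :=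
    ContinuousMap.continuous_precomp p
  refine (isSeparable_range hcomp).mono ?_
  intro h hh
  have hfac : Function.FactorsThrough h p := fun x y hxy =>
    hsep h hh x y (congrArg Subtype.val hxy)
  exact ⟨hp.lift h hfac, hp.lift_comp h hfac⟩

/-- For a fully closed continuous surjection `f : X → Y` of a compact Hausdorff space onto a
metrizable compact space with metrizable fibers, and any countable `S ⊆ Y`, the set of
continuous functions which are constant on every fiber `f⁻¹(y)` with `y ∉ S` is separable in
the supremum norm. -/
theorem constant_off_countable_set_separable
    {X Y : Type} [TopologicalSpace X] [CompactSpace X] [T2Space X]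
    [TopologicalSpace Y] [CompactSpace Y] [T2Space Y]
    [TopologicalSpace.MetrizableSpace Y]
    (f : C(X, Y)) (hsurj : Function.Surjective f)
    (hfc : ∀ F₁ F₂ : Set X, IsClosed F₁ → IsClosed F₂ → Disjoint F₁ F₂ →
      (f '' F₁ ∩ f '' F₂).Finite)
    (hfib : ∀ y : Y, TopologicalSpace.MetrizableSpace (f ⁻¹' {y} : Set X))
    (S : Set Y) (hS : S.Countable) :
    TopologicalSpace.IsSeparable
      {h : C(X, ℝ) | ∀ y : Y, y ∉ S →
        ∀ x₁ ∈ f ⁻¹' {y}, ∀ x₂ ∈ f ⁻¹' {y}, h x₁ = h x₂} := by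
  obtain ⟨𝒩, h𝒩, hnet⟩ := exists_countable_network f hfib S hS
  exact isSeparable_of_network _ 𝒩 h𝒩 hnet
end

section
/- Let X be a compact Hausdorff space, Y a metrizable compact space, and f : X → Y a continuous surjection such that every fiber f⁻¹(y) is metrizable and f⁻¹(y) is a singleton for all but finitely many y ∈ Y. Then X is metrizable. -/
/-!
Each of the finitely many non-trivial fibers is a compact metrizable space, hence admits a
continuous injection into `ℕ → ℝ` (through an embedding into `ℓ^∞`), which by Tietze's theorem
extends to a continuous map `g y : X → (ℕ → ℝ)`. The map `x ↦ (f x, (g y x)_y)`, with `y` ranging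
over the non-trivial fibers, is continuous and injective: `f` separates points of different fibers,
and `g y` separates the points of the fiber over `y`. Its codomain is metrizable, and since `X` is
compact it is an embedding.
-/

open TopologicalSpace in
/-- A continuous map to `ℕ → ℝ` that separates the points of a compact metrizable subset `s`. -/
theorem exists_continuousMap_injOn_of_metrizable {X : Type*} [TopologicalSpace X] [CompactSpace X]
    [T2Space X] (s : Set X) (hs : IsClosed s) [MetrizableSpace s] :
    ∃ g : C(X, ℕ → ℝ), Set.InjOn g s := by
  have : CompactSpace s := isCompact_iff_compactSpace.mp hs.isCompact
  obtain ⟨e, he⟩ := exists_embedding_l_infty s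
  let e' : C(s, ℕ → ℝ) :=
    ⟨fun x n => e x n, continuous_pi fun n =>
      (continuous_eval_const n).comp he.continuous⟩
  obtain ⟨g, hg⟩ := e'.exists_restrict_eq hs
  refine ⟨g, fun x hx x' hx' h => ?_⟩
  have hx₁ : g x = e' ⟨x, hx⟩ := DFunLike.congr_fun hg ⟨x, hx⟩
  have hx₂ : g x' = e' ⟨x', hx'⟩ := DFunLike.congr_fun hg ⟨x', hx'⟩
  have : e ⟨x, hx⟩ = e ⟨x', hx'⟩ := by
    ext n
    exact congrFun (hx₁.symm.trans (h.trans hx₂)) n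
  exact congrArg Subtype.val (he.injective this)

/-- If `X` is compact Hausdorff, `Y` is compact metrizable, and `f : X → Y` is a continuous
surjection with metrizable fibers which are singletons for all but finitely many `y ∈ Y`,
then `X` is metrizable. -/
theorem metrizable_of_almost_injective_onto_metrizable
    {X Y : Type} [TopologicalSpace X] [CompactSpace X] [T2Space X]
    [TopologicalSpace Y] [CompactSpace Y] [TopologicalSpace.MetrizableSpace Y]
    (f : C(X, Y)) (hsurj : Function.Surjective f)
    (hfib : ∀ y : Y, TopologicalSpace.MetrizableSpace (f ⁻¹' {y} : Set X))
    (hfin : {y : Y | ¬ ∃ x : X, f ⁻¹' {y} = {x}}.Finite) :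
    TopologicalSpace.MetrizableSpace X := by
  have key (y : Y) : ∃ g : C(X, ℕ → ℝ), Set.InjOn g (f ⁻¹' {y}) :=
    exists_continuousMap_injOn_of_metrizable _ (isClosed_singleton.preimage f.continuous)
  choose g hg using key
  let B : Set Y := {y : Y | ¬ ∃ x : X, f ⁻¹' {y} = {x}}
  have : Fintype B := hfin.fintype
  let F : X → Y × (B → ℕ → ℝ) := fun x => (f x, fun y => g y x)
  have hF : Continuous F := by fun_prop
  have hinj : Function.Injective F := by
    intro x x' h
    have h₁ : f x = f x' := congrArg Prod.fst h
    by_cases hy : ∃ z : X, f ⁻¹' {f x'} = {z}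
    · obtain ⟨z, hz⟩ := hy
      have hx : x ∈ f ⁻¹' {f x'} := h₁
      have hx' : x' ∈ f ⁻¹' {f x'} := rfl
      rw [hz] at hx hx'
      exact hx.trans hx'.symm
    · exact hg (f x') h₁ rfl (congrFun (congrArg Prod.snd h) ⟨f x', hy⟩)
  exact (hF.isClosedEmbedding hinj).isEmbedding.metrizableSpace
end
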